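/- Let m and n be relatively prime integers, each at least 2, and let μ be a Borel probability measure on 𝕋 invariant under ×n such that the measure-theoretic entropies of the ergodic components of μ with respect to ×n are bounded below by some positive number. Then for μ-almost every x ∈ 𝕋 the orbit of x under iterates of ×m is uniformly distributed with respect to Lebesgue measure: for every continuous function f on 𝕋, (1/N) Σ_{k=0}^{N-1} f(m^k x mod 1) converges as N → ∞ to the Lebesgue integral of f. -/

import Mathlib

open MeasureTheory ENNReal

section Entropy

variable {α : Type*} [MeasurableSpace α]

/-- `P : Fin m → Set α` is a finite measurable partition of `α` modulo `μ`-null sets. -/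
def IsFinMeasPartition (μ : Measure α) {m : ℕ} (P : Fin m → Set α) : Prop :=
  (∀ i, MeasurableSet (P i)) ∧ Pairwise (Function.onFun Disjoint P) ∧ μ (⋃ i, P i)ᶜ = 0

/-- Shannon entropy (information) of a finite family of sets with respect to `μ`. -/
noncomputable def finPartitionEntropy (μ : Measure α) {ι : Type*} [Fintype ι]
    (P : ι → Set α) : ℝ≥0∞ :=
  ENNReal.ofReal (∑ i, Real.negMulLog ((μ (P i)).toReal))

/-- The common refinement `P ∨ T⁻¹ P ∨ ⋯ ∨ T^{-(n-1)} P`, indexed by `Fin n → Fin m`. -/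
def refinedPartition (T : α → α) {m : ℕ} (P : Fin m → Set α) (n : ℕ) :
    (Fin n → Fin m) → Set α :=
  fun f => ⋂ i : Fin n, T^[(i : ℕ)] ⁻¹' P (f i)

/-- The measure-theoretic (Kolmogorov–Sinai) entropy `h_μ(T)` of a transformation `T`
preserving `μ`, defined as the supremum over all finite measurable partitions `P` of
`inf_n H_μ(P ∨ T⁻¹P ∨ ⋯ ∨ T^{-n}P)/(n+1)` (by subadditivity this infimum equals the
usual limit). -/
noncomputable def ksEntropy (T : α → α) (μ : Measure α) : ℝ≥0∞ :=
  ⨆ (m : ℕ) (P : Fin m → Set α) (_ : IsFinMeasPartition μ P),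
    ⨅ n : ℕ, finPartitionEntropy μ (refinedPartition T P (n + 1)) / (n + 1 : ℝ≥0∞)

end Entropy

open MeasureTheory Filter

/-!
For an ergodic measure `ρ` of positive entropy the first base-`n` digit of `y` is not determined by
`n • y`, so the `g`-function of `ρ`, the conditional probability of `y` among the preimages of
`n • y`, is not almost everywhere `1`. By ergodicity its products along an orbit decay
exponentially: after `N` steps they are at most `θ ^ N` for some `θ < 1`.

Let `W_K` be the average over `k < K` of the character `fourier a`, `a ≠ 0`, at `m ^ k • x`. Summing
`fourier b` over the `n ^ N` preimages of a point under `n ^ N` gives zero unless `n ^ N` divides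
`b`. Since lifting the exponent leaves few pairs `k, l < K` with `n ^ N ∣ a * (m ^ k - m ^ l)`, the
sum of `|W_K| ^ 2` over these preimages is bounded uniformly for `n ^ N ≤ K`. Each preimage whose
conditional probability is at most `θ ^ N` then contributes little: the integral of `|W_K| ^ 2` over
such points is `O(θ ^ N)`. This is summable along `K = ⌊c ^ j⌋` with `n ^ N` the largest power of
`n` below `K`, so `W_K` tends to `0` almost everywhere along these `K`, and letting `c` decrease to
`1` fills the gaps. Weyl's criterion concludes for `ρ`, and integration over the ergodic components
gives the result for `μ`.
-/

section LiftingTheExponent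

theorem emultiplicity_int_pow_sub_pow {p : ℕ} (hp : p.Prime) {x y : ℤ} (hxy : (p : ℤ) ∣ x - y)
    (hx : ¬(p : ℤ) ∣ x) (h4 : p = 2 → 4 ∣ x - y) (k : ℕ) :
    emultiplicity (p : ℤ) (x ^ k - y ^ k) =
      emultiplicity (p : ℤ) (x - y) + emultiplicity (p : ℤ) (k : ℤ) := by
  rcases hp.eq_two_or_odd' with rfl | hodd
  · exact_mod_cast Int.two_pow_sub_pow' k (h4 rfl) (by exact_mod_cast hx)
  · rw [Int.natCast_emultiplicity]
    exact Int.emultiplicity_pow_sub_pow hp hodd hxy hx k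

theorem dvd_mul_sub_one_mul_of_dvd_mul_pow_sub_one {x a : ℤ} {M k : ℕ}
    (hx : ∀ p : ℕ, p.Prime → p ∣ M → (p : ℤ) ∣ x - 1) (h4 : 2 ∣ M → 4 ∣ x - 1)
    (h : (M : ℤ) ∣ a * (x ^ k - 1)) : (M : ℤ) ∣ a * (x - 1) * k := by
  rw [Int.natCast_dvd, Nat.dvd_iff_prime_pow_dvd_dvd]
  intro p j hp hpj
  rcases eq_or_ne j 0 with rfl | hj
  · simp
  have hpM : p ∣ M := (dvd_pow_self p hj).trans hpj
  have hp' : Prime (p : ℤ) := Nat.prime_iff_prime_int.1 hp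
  have hpx : ¬(p : ℤ) ∣ x := fun hd ↦
    hp'.not_dvd_one (by simpa using dvd_sub hd (hx p hp hpM))
  have lte := emultiplicity_int_pow_sub_pow hp (y := 1) (hx p hp hpM) hpx
    (fun h2 ↦ h4 (h2 ▸ hpM)) k
  rw [one_pow] at lte
  have hpow : (p : ℤ) ^ j ∣ a * (x ^ k - 1) := (by exact_mod_cast hpj : (p : ℤ) ^ j ∣ M).trans h
  rw [← Int.natCast_dvd, Nat.cast_pow]
  rwa [pow_dvd_iff_le_emultiplicity, emultiplicity_mul hp', emultiplicity_mul hp', add_assoc,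
    ← lte, ← emultiplicity_mul hp', ← pow_dvd_iff_le_emultiplicity]

theorem dvd_pow_two_mul_totient_sub_one {m n : ℕ} (hmn : m.Coprime n) :
    (n : ℤ) ∣ (m : ℤ) ^ (2 * n.totient) - 1 := by
  have h : 1 ≡ m ^ (2 * n.totient) [MOD n] := by
    simpa [mul_comm 2, pow_mul] using ((Nat.ModEq.pow_totient hmn).pow 2).symm
  simpa using Nat.modEq_iff_dvd.1 h

theorem four_dvd_pow_two_mul_sub_one {m : ℕ} (hm : Odd m) (r : ℕ) :
    (4 : ℤ) ∣ (m : ℤ) ^ (2 * r) - 1 := by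
  have hodd : Odd ((m : ℤ) ^ r) := ((Int.odd_coe_nat m).2 hm).pow
  have := Int.sq_mod_four_eq_one_of_odd hodd
  rw [mul_comm, pow_mul]
  lia

theorem exists_pow_dvd_mul_of_dvd_mul_pow_sub_one {m n : ℕ} (hm : 2 ≤ m) (hn : 0 < n)
    (hmn : m.Coprime n) :
    ∃ C : ℕ, 0 < C ∧ ∀ (N k : ℕ) (a : ℤ), ((n ^ N : ℕ) : ℤ) ∣ a * ((m : ℤ) ^ k - 1) →
      ((n ^ N : ℕ) : ℤ) ∣ a * C * k := by
  -- The factor `2` secures `4 ∣ m ^ r - 1`, which lifting the exponent requires at the prime `2`.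
  set r := 2 * n.totient
  have hr : r ≠ 0 := by have := Nat.totient_pos.2 hn; lia
  have hone : 1 < m ^ r := Nat.one_lt_pow hr (by lia)
  refine ⟨m ^ r - 1, by lia, fun N k a h ↦ ?_⟩
  have hpow : ((n ^ N : ℕ) : ℤ) ∣ a * (((m : ℤ) ^ r) ^ k - 1) := by
    refine h.trans (mul_dvd_mul_left _ ?_)
    rw [← pow_mul, mul_comm, pow_mul]
    simpa using sub_dvd_pow_sub_pow ((m : ℤ) ^ k) 1 r
  have hdvd {p : ℕ} (hp : p.Prime) (hpN : p ∣ n ^ N) : p ∣ n := hp.dvd_of_dvd_pow hpN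
  push_cast [hone.le]
  refine mod_cast dvd_mul_sub_one_mul_of_dvd_mul_pow_sub_one
    (fun p hp hpN ↦ (Int.natCast_dvd_natCast.2 (hdvd hp hpN)).trans
      (dvd_pow_two_mul_totient_sub_one hmn))
    (fun h2 ↦ four_dvd_pow_two_mul_sub_one ?_ _) hpow
  exact Nat.coprime_two_right.1 (hmn.coprime_dvd_right (hdvd Nat.prime_two h2))

theorem exists_modEq_of_dvd_mul_pow_sub_pow {m n : ℕ} (hm : 2 ≤ m) (hn : 0 < n)
    (hmn : m.Coprime n) {a : ℤ} (ha : a ≠ 0) :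
    ∃ A : ℕ, 0 < A ∧ ∀ N k l : ℕ, ((n ^ N : ℕ) : ℤ) ∣ a * ((m : ℤ) ^ k - (m : ℤ) ^ l) →
      A * k ≡ A * l [MOD n ^ N] := by
  obtain ⟨C, hC, hdvd⟩ := exists_pow_dvd_mul_of_dvd_mul_pow_sub_one hm hn hmn
  refine ⟨a.natAbs * C, Nat.mul_pos (Int.natAbs_pos.2 ha) hC, fun N k l h ↦ ?_⟩
  wlog hlk : l ≤ k generalizing k l
  · refine (this l k ?_ (le_of_not_ge hlk)).symm
    rwa [← neg_sub ((m : ℤ) ^ k), mul_neg, dvd_neg]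
  obtain ⟨d, rfl⟩ := Nat.exists_eq_add_of_le hlk
  have hcop : IsCoprime ((n ^ N : ℕ) : ℤ) ((m : ℤ) ^ l) :=
    (Nat.isCoprime_iff_coprime.2 (hmn.symm.pow_left N)).pow_right
  have hd : ((n ^ N : ℕ) : ℤ) ∣ a * ((m : ℤ) ^ d - 1) :=
    hcop.dvd_of_dvd_mul_left
      (by rwa [pow_add, ← mul_sub_one ((m : ℤ) ^ l), mul_left_comm] at h)
  have hAd : n ^ N ∣ a.natAbs * C * d := by
    simpa only [Int.natCast_dvd, Int.natAbs_mul, Int.natAbs_natCast] using hdvd N d a hd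
  simpa [mul_add] using (Nat.modEq_zero_iff_dvd.2 hAd).add_left (a.natAbs * C * l)

theorem card_filter_mul_modEq_le {A : ℕ} (hA : 0 < A) (K M : ℕ) :
    ((Finset.range K ×ˢ Finset.range K).filter (fun q ↦ A * q.1 ≡ A * q.2 [MOD M])).card ≤
      (A * K / M + 1) * K := by
  -- For fixed `l` the residue of `A * k` mod `M` is known, so `A * k / M` determines `k`.
  have h := Finset.card_le_card_of_injOn
    (s := (Finset.range K ×ˢ Finset.range K).filter (fun q ↦ A * q.1 ≡ A * q.2 [MOD M]))
    (t := Finset.range (A * K / M + 1) ×ˢ Finset.range K) (fun q ↦ (A * q.1 / M, q.2)) ?_ ?_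
  · simpa using h
  · intro q hq
    simp only [Finset.coe_filter, Finset.mem_product, Finset.mem_range, Set.mem_ofPred_eq] at hq
    simpa using ⟨Nat.div_le_div_right (c := M) (Nat.mul_le_mul_left A hq.1.1.le), hq.1.2⟩
  · rintro ⟨k, l⟩ hk ⟨k', l'⟩ hk' heq
    simp only [Finset.coe_filter, Set.mem_ofPred_eq, Prod.mk.injEq] at hk hk' heq ⊢
    obtain ⟨hdiv, rfl⟩ := heq
    have hmod : A * k % M = A * k' % M := hk.2.trans hk'.2.symm
    have hAk : A * k = A * k' := by
      rw [← Nat.div_add_mod (A * k) M, ← Nat.div_add_mod (A * k') M, hdiv, hmod]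
    exact ⟨Nat.eq_of_mul_eq_mul_left hA hAk, rfl⟩

theorem exists_pow_mul_card_filter_dvd_le {m n : ℕ} (hm : 2 ≤ m) (hn : 0 < n)
    (hmn : m.Coprime n) {a : ℤ} (ha : a ≠ 0) :
    ∃ B : ℕ, ∀ N K : ℕ, n ^ N ≤ K →
      n ^ N * ((Finset.range K ×ˢ Finset.range K).filter
        (fun q ↦ ((n ^ N : ℕ) : ℤ) ∣ a * ((m : ℤ) ^ q.1 - (m : ℤ) ^ q.2))).card ≤ B * K ^ 2 := by
  obtain ⟨A, hA, hmod⟩ := exists_modEq_of_dvd_mul_pow_sub_pow hm hn hmn ha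
  refine ⟨A + 1, fun N K hK ↦ ?_⟩
  calc _ ≤ n ^ N * ((A * K / n ^ N + 1) * K) := Nat.mul_le_mul_left _ <|
        (Finset.card_le_card (Finset.monotone_filter_right _ fun q _ ↦ hmod N q.1 q.2)).trans
          (card_filter_mul_modEq_le hA K (n ^ N))
    _ = (n ^ N * (A * K / n ^ N) + n ^ N) * K := by ring
    _ ≤ (A * K + K) * K := Nat.mul_le_mul_right _ (add_le_add (Nat.mul_div_le _ _) hK)
    _ = (A + 1) * K ^ 2 := by ring

end LiftingTheExponent

section MaximalErgodic

variable {α : Type*} {T : α → α} {g : α → ℝ}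

theorem partialSups_birkhoffSum_nonneg (T : α → α) (g : α → ℝ) (N : ℕ) (x : α) :
    0 ≤ partialSups (birkhoffSum T g) N x := by
  simpa using le_partialSups_of_le (birkhoffSum T g) (Nat.zero_le N) x

theorem partialSups_birkhoffSum_le_add {N : ℕ} {x : α}
    (hx : 0 < partialSups (birkhoffSum T g) N x) :
    partialSups (birkhoffSum T g) N x ≤ g x + partialSups (birkhoffSum T g) N (T x) := by
  rw [Pi.partialSups_apply] at hx ⊢
  obtain ⟨j, hjN, hj⟩ := exists_partialSups_eq (birkhoffSum T g · x) N
  rcases j with _ | j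
  · simp [hj] at hx
  · rw [hj, birkhoffSum_succ']
    gcongr
    exact le_partialSups_of_le (birkhoffSum T g) ((Nat.le_succ j).trans hjN) (T x)

theorem bddAbove_range_birkhoffSum_comp_iff (T : α → α) (g : α → ℝ) (x : α) :
    BddAbove (Set.range (birkhoffSum T g · (T x))) ↔
      BddAbove (Set.range (birkhoffSum T g · x)) := by
  simp only [bddAbove_def, Set.forall_mem_range]
  refine ⟨fun ⟨C, hC⟩ ↦ ⟨max 0 (g x + C), fun N ↦ ?_⟩, fun ⟨C, hC⟩ ↦ ⟨C - g x, fun N ↦ ?_⟩⟩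
  · rcases N with _ | N
    · simp
    · rw [birkhoffSum_succ']
      exact le_max_of_le_right (by gcongr; exact hC N)
  · have := hC (N + 1)
    rw [birkhoffSum_succ'] at this
    linarith

variable [MeasurableSpace α] {ρ : Measure α}

theorem integrable_birkhoffSum (hT : MeasurePreserving T ρ ρ) (hg : Integrable g ρ) (N : ℕ) :
    Integrable (birkhoffSum T g N) ρ :=
  integrable_finsetSum _ fun k _ ↦ (hT.iterate k).integrable_comp_of_integrable hg

theorem integrable_partialSups {f : ℕ → α → ℝ} (hf : ∀ n, Integrable (f n) ρ) (N : ℕ) :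
    Integrable (partialSups f N) ρ := by
  induction N with
  | zero => simpa using hf 0
  | succ N ih =>
    rw [← Order.succ_eq_add_one, partialSups_succ]
    exact ih.sup (hf _)

theorem nullMeasurableSet_partialSups_birkhoffSum_pos (hT : MeasurePreserving T ρ ρ)
    (hg : Integrable g ρ) (N : ℕ) :
    NullMeasurableSet {x | 0 < partialSups (birkhoffSum T g) N x} ρ :=
  nullMeasurableSet_lt aemeasurable_const
    (integrable_partialSups (integrable_birkhoffSum hT hg) N).aemeasurable

theorem setIntegral_partialSups_birkhoffSum_pos_nonneg (hT : MeasurePreserving T ρ ρ)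
    (hg : Integrable g ρ) (N : ℕ) :
    0 ≤ ∫ x in {x | 0 < partialSups (birkhoffSum T g) N x}, g x ∂ρ := by
  set M := partialSups (birkhoffSum T g) N
  have hE := nullMeasurableSet_partialSups_birkhoffSum_pos hT hg N
  have hM : Integrable M ρ := integrable_partialSups (integrable_birkhoffSum hT hg) N
  have hMT : Integrable (M ∘ T) ρ := hT.integrable_comp_of_integrable hM
  have hle (x : α) : M x ≤ {x | 0 < M x}.indicator g x + M (T x) := by
    by_cases hx : 0 < M x
    · simpa [Set.indicator_of_mem (s := {x | 0 < M x}) hx] using partialSups_birkhoffSum_le_add hx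
    · rw [Set.indicator_of_notMem (s := {x | 0 < M x}) hx, zero_add]
      exact (not_lt.1 hx).trans (partialSups_birkhoffSum_nonneg T g N (T x))
  have hint := integral_mono hM ((hg.indicator₀ hE).add hMT) hle
  have hinv : ∫ x, (M ∘ T) x ∂ρ = ∫ x, M x ∂ρ := by
    conv_rhs => rw [← hT.map_eq]
    exact (integral_map hT.aemeasurable (hT.map_eq.symm ▸ hM.aestronglyMeasurable)).symm
  rw [integral_add' (hg.indicator₀ hE) hMT, integral_indicator₀ hE, hinv] at hint
  linarith

theorem measure_forall_birkhoffSum_le_zero_ne_zero (hT : MeasurePreserving T ρ ρ)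
    (hg : Integrable g ρ) (hneg : ∫ x, g x ∂ρ < 0) :
    ρ {x | ∀ N, birkhoffSum T g N x ≤ 0} ≠ 0 := by
  intro hzero
  set E : ℕ → Set α := fun N ↦ {x | 0 < partialSups (birkhoffSum T g) N x}
  have hEmono : Monotone E := fun _ _ h x (hx : 0 < _) ↦
    hx.trans_le (partialSups_monotone (birkhoffSum T g) h x)
  have hEuniv : (⋃ N, E N : Set α) =ᵐ[ρ] Set.univ := by
    refine ae_eq_univ.2 (measure_mono_null (t := {x | ∀ N, birkhoffSum T g N x ≤ 0})
      (fun x hx N ↦ ?_) hzero)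
    simp only [E, Set.compl_iUnion, Set.mem_iInter, Set.mem_compl_iff, Set.mem_ofPred_eq,
      not_lt] at hx
    exact (le_partialSups (birkhoffSum T g) N x).trans (hx N)
  have hlim := tendsto_setIntegral_of_monotone₀
    (nullMeasurableSet_partialSups_birkhoffSum_pos hT hg) hEmono hg.integrableOn
  rw [setIntegral_congr_set hEuniv, setIntegral_univ] at hlim
  exact hneg.not_ge (ge_of_tendsto' hlim (setIntegral_partialSups_birkhoffSum_pos_nonneg hT hg))

theorem ae_bddAbove_range_birkhoffSum (hT : Ergodic T ρ) (hgm : Measurable g)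
    (hg : Integrable g ρ) (hneg : ∫ x, g x ∂ρ < 0) :
    ∀ᵐ x ∂ρ, BddAbove (Set.range (birkhoffSum T g · x)) := by
  have hmeas : MeasurableSet {x | BddAbove (Set.range (birkhoffSum T g · x))} :=
    measurableSet_bddAbove_range fun N ↦
      Finset.measurable_sum _ fun k _ ↦ hgm.comp (hT.measurable.iterate k)
  refine (hT.ae_mem_or_ae_notMem hmeas
    (Set.ext (bddAbove_range_birkhoffSum_comp_iff T g))).resolve_right fun hnot ↦ ?_
  refine measure_forall_birkhoffSum_le_zero_ne_zero hT.toMeasurePreserving hg hneg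
    (measure_mono_null (fun x hx ↦ ?_) (ae_iff.1 hnot))
  exact not_not.2 ⟨0, Set.forall_mem_range.2 hx⟩

theorem exists_eventually_mul_le_birkhoffSum_indicator [IsProbabilityMeasure ρ]
    (hT : Ergodic T ρ) {A : Set α} (hA : MeasurableSet A) (hpos : ρ A ≠ 0) :
    ∃ η : ℝ, 0 < η ∧ ∀ᵐ x ∂ρ, ∀ᶠ N : ℕ in atTop,
      η * N ≤ birkhoffSum T (A.indicator fun _ ↦ (1 : ℝ)) N x := by
  have hposr : 0 < ρ.real A := ENNReal.toReal_pos hpos (measure_ne_top _ _)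
  have hind : Integrable (A.indicator fun _ ↦ (1 : ℝ)) ρ := (integrable_const 1).indicator hA
  have hneg : ∫ x, ρ.real A / 2 - A.indicator (fun _ ↦ (1 : ℝ)) x ∂ρ < 0 := by
    rw [integral_sub (integrable_const _) hind, integral_indicator hA]
    simpa using hposr
  refine ⟨ρ.real A / 4, by positivity, ?_⟩
  filter_upwards [ae_bddAbove_range_birkhoffSum hT
    (measurable_const.sub (measurable_const.indicator hA)) ((integrable_const _).sub hind) hneg]
    with x ⟨C, hC⟩
  filter_upwards [tendsto_natCast_atTop_atTop.eventually_ge_atTop (C / (ρ.real A / 4))] with N hN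
  have hsum := hC ⟨N, rfl⟩
  simp only [birkhoffSum, Pi.sub_apply, Finset.sum_sub_distrib, Finset.sum_const, Finset.card_range,
    nsmul_eq_mul] at hsum ⊢
  rw [div_le_iff₀ (by positivity)] at hN
  linarith

end MaximalErgodic

section ShannonEntropy

variable {α ι κ σ : Type*} [MeasurableSpace α] [Fintype ι]

/-- The Shannon entropy `H(X)` of a random variable with finitely many values, in nats. -/
noncomputable def shannonEntropy (ρ : Measure α) (X : α → ι) : ℝ :=
  ∑ i, Real.negMulLog (ρ.real (X ⁻¹' {i}))

theorem shannonEntropy_congr_ae {ρ : Measure α} {X Y : α → ι} (h : X =ᵐ[ρ] Y) :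
    shannonEntropy ρ X = shannonEntropy ρ Y :=
  Finset.sum_congr rfl fun i _ ↦ congrArg Real.negMulLog <|
    measureReal_congr (h.fun_comp (· ∈ ({i} : Set ι)))

theorem negMulLog_sum_le_sum_negMulLog {ι : Type*} (s : Finset ι) {p : ι → ℝ}
    (hp : ∀ i ∈ s, 0 ≤ p i) :
    Real.negMulLog (∑ i ∈ s, p i) ≤ ∑ i ∈ s, Real.negMulLog (p i) := by
  simp only [Real.negMulLog, neg_mul, Finset.sum_mul, Finset.sum_neg_distrib]
  refine neg_le_neg (Finset.sum_le_sum fun i hi ↦ ?_)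
  rcases (hp i hi).eq_or_lt with h | h
  · simp [← h]
  · gcongr
    exact Finset.single_le_sum hp hi

theorem negMulLog_le_neg_mul_log_add {r p q : ℝ} (hr : 0 ≤ r) (hrp : r ≤ p) (hrq : r ≤ q) :
    Real.negMulLog r ≤ -(r * Real.log p) + -(r * Real.log q) + (p * q - r) := by
  rcases hr.eq_or_lt with rfl | hr
  · simpa using mul_nonneg hrp hrq
  have hp := hr.trans_le hrp
  have hq := hr.trans_le hrq
  have hlog := Real.log_le_sub_one_of_pos (show 0 < p * q / r by positivity)
  rw [Real.log_div (by positivity) hr.ne', Real.log_mul hp.ne' hq.ne'] at hlog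
  have hmul := mul_le_mul_of_nonneg_left hlog hr.le
  rw [mul_sub_one, mul_div_cancel₀ _ hr.ne'] at hmul
  rw [Real.negMulLog]
  linarith

theorem sum_negMulLog_le_sum_negMulLog_marginals [Fintype κ] {r : ι × κ → ℝ} (hr : ∀ z, 0 ≤ r z)
    (hone : ∑ z, r z = 1) :
    ∑ z, Real.negMulLog (r z) ≤
      ∑ i, Real.negMulLog (∑ j, r (i, j)) + ∑ j, Real.negMulLog (∑ i, r (i, j)) := by
  set p : ι → ℝ := fun i ↦ ∑ j, r (i, j)
  set q : κ → ℝ := fun j ↦ ∑ i, r (i, j)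
  have hp : ∑ z : ι × κ, r z * Real.log (p z.1) = ∑ i, p i * Real.log (p i) := by
    simp only [Fintype.sum_prod_type, p, Finset.sum_mul]
  have hq : ∑ z : ι × κ, r z * Real.log (q z.2) = ∑ j, q j * Real.log (q j) := by
    simp only [Fintype.sum_prod_type_right, q, Finset.sum_mul]
  have hpq : ∑ z : ι × κ, p z.1 * q z.2 = 1 := by
    rw [Fintype.sum_prod_type, ← Finset.sum_mul_sum, ← Fintype.sum_prod_type,
      ← Fintype.sum_prod_type_right, hone, one_mul]
  calc ∑ z, Real.negMulLog (r z)
      ≤ ∑ z : ι × κ, (-(r z * Real.log (p z.1)) + -(r z * Real.log (q z.2)) +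
          (p z.1 * q z.2 - r z)) := Finset.sum_le_sum fun z _ ↦
        negMulLog_le_neg_mul_log_add (hr z)
          (Finset.single_le_sum (f := fun j ↦ r (z.1, j)) (fun j _ ↦ hr _) (Finset.mem_univ z.2))
          (Finset.single_le_sum (f := fun i ↦ r (i, z.2)) (fun i _ ↦ hr _) (Finset.mem_univ z.1))
    _ = ∑ i, Real.negMulLog (p i) + ∑ j, Real.negMulLog (q j) := by
        simp only [Finset.sum_add_distrib, Finset.sum_sub_distrib, Finset.sum_neg_distrib, hp, hq,
          hpq, hone, Real.negMulLog, neg_mul, sub_self, add_zero]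

variable [MeasurableSpace ι] [MeasurableSingletonClass ι] {ρ : Measure α} {X : α → ι}

theorem measureReal_preimage_comp_singleton [IsFiniteMeasure ρ] [DecidableEq κ] (hX : Measurable X)
    (φ : ι → κ) (j : κ) :
    ρ.real ((φ ∘ X) ⁻¹' {j}) = ∑ i with φ i = j, ρ.real (X ⁻¹' {i}) := by
  rw [sum_measureReal_preimage_singleton _ fun i _ ↦ hX (measurableSet_singleton i)]
  congr 1
  ext x
  simp

variable [Fintype κ]

theorem shannonEntropy_comp_le [IsFiniteMeasure ρ] (hX : Measurable X) (φ : ι → κ) :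
    shannonEntropy ρ (φ ∘ X) ≤ shannonEntropy ρ X := by
  classical
  simp only [shannonEntropy, measureReal_preimage_comp_singleton hX]
  rw [← Finset.sum_fiberwise (Finset.univ : Finset ι) φ]
  exact Finset.sum_le_sum fun j _ ↦
    negMulLog_sum_le_sum_negMulLog _ fun i _ ↦ measureReal_nonneg

variable [Fintype σ] [MeasurableSpace κ] [MeasurableSingletonClass κ] {Y : α → κ}

theorem shannonEntropy_prodMk_le [IsProbabilityMeasure ρ] (hX : Measurable X)
    (hY : Measurable Y) :
    shannonEntropy ρ (fun x ↦ (X x, Y x)) ≤ shannonEntropy ρ X + shannonEntropy ρ Y := by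
  classical
  have hXY : Measurable fun x ↦ (X x, Y x) := hX.prodMk hY
  have hfst (i : ι) : ρ.real (X ⁻¹' {i}) =
      ∑ j, ρ.real ((fun x ↦ (X x, Y x)) ⁻¹' {(i, j)}) := by
    simpa [Finset.sum_filter, Fintype.sum_prod_type_right, Function.comp_def] using
      measureReal_preimage_comp_singleton (ρ := ρ) hXY Prod.fst i
  have hsnd (j : κ) : ρ.real (Y ⁻¹' {j}) =
      ∑ i, ρ.real ((fun x ↦ (X x, Y x)) ⁻¹' {(i, j)}) := by
    simpa [Finset.sum_filter, Fintype.sum_prod_type, Function.comp_def] using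
      measureReal_preimage_comp_singleton (ρ := ρ) hXY Prod.snd j
  simp only [shannonEntropy, hfst, hsnd]
  refine sum_negMulLog_le_sum_negMulLog_marginals
    (r := fun z ↦ ρ.real ((fun x ↦ (X x, Y x)) ⁻¹' {z})) (fun _ ↦ measureReal_nonneg) ?_
  rw [sum_measureReal_preimage_singleton _ fun z _ ↦ hXY (measurableSet_singleton z)]
  simp

theorem shannonEntropy_uncurry_comp_le [IsProbabilityMeasure ρ] (hX : Measurable X)
    (hY : Measurable Y) (φ : ι → κ → σ) :
    shannonEntropy ρ (fun x ↦ φ (X x) (Y x)) ≤ shannonEntropy ρ X + shannonEntropy ρ Y :=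
  (shannonEntropy_comp_le (hX.prodMk hY) φ.uncurry).trans (shannonEntropy_prodMk_le hX hY)

theorem shannonEntropy_comp_measurePreserving {T : α → α} (hT : MeasurePreserving T ρ ρ)
    (hX : Measurable X) : shannonEntropy ρ (X ∘ T) = shannonEntropy ρ X :=
  Finset.sum_congr rfl fun i _ ↦ congrArg Real.negMulLog <|
    hT.measureReal_preimage (hX (measurableSet_singleton i)).nullMeasurableSet

theorem exists_shannonEntropy_le_of_measureReal_ne_le (ρ : Measure α) [IsProbabilityMeasure ρ]
    (i₀ : ι) {ε : ℝ} (hε : 0 < ε) :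
    ∃ δ : ℝ, 0 < δ ∧ ∀ X : α → ι, Measurable X → ρ.real {x | X x ≠ i₀} ≤ δ →
      shannonEntropy ρ X ≤ ε := by
  have : Nonempty ι := ⟨i₀⟩
  have hcard : 0 < ε / Fintype.card ι := by positivity
  have hsmall : ∀ᶠ t in nhds (0 : ℝ), Real.negMulLog t < ε / Fintype.card ι :=
    Real.continuous_negMulLog.continuousAt.eventually_lt_const (by simpa)
  have hlarge : ∀ᶠ t in nhds (0 : ℝ), Real.negMulLog (1 - t) < ε / Fintype.card ι :=
    (Real.continuous_negMulLog.comp (continuous_const.sub continuous_id)).continuousAt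
      |>.eventually_lt_const (by simpa)
  obtain ⟨δ, hδ, hbound⟩ := Metric.eventually_nhds_iff.1 (hsmall.and hlarge)
  refine ⟨δ / 2, by positivity, fun X hX hXδ ↦ ?_⟩
  have hlt {t : ℝ} (ht₀ : 0 ≤ t) (ht : t ≤ ρ.real {x | X x ≠ i₀}) : dist t 0 < δ := by
    rw [Real.dist_0_eq_abs, abs_of_nonneg ht₀]
    linarith
  have hterm (i : ι) : Real.negMulLog (ρ.real (X ⁻¹' {i})) ≤ ε / Fintype.card ι := by
    rcases eq_or_ne i i₀ with rfl | hi
    · have hcompl : ρ.real (X ⁻¹' {i}) = 1 - ρ.real {x | X x ≠ i} := by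
        rw [eq_sub_iff_add_eq, ← probReal_add_probReal_compl (μ := ρ)
          (hX (measurableSet_singleton i))]
        rfl
      rw [hcompl]
      exact (hbound (hlt measureReal_nonneg le_rfl)).2.le
    · exact (hbound (hlt measureReal_nonneg (measureReal_mono fun x hx h ↦
        hi (hx.symm.trans h)))).1.le
  calc shannonEntropy ρ X ≤ ∑ _i : ι, ε / Fintype.card ι := Finset.sum_le_sum fun i _ ↦ hterm i
    _ = ε := by simp [mul_div_cancel₀]

end ShannonEntropy

theorem exists_measurable_mem {α ι : Type*} [MeasurableSpace α] [Finite ι] [Nonempty ι]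
    [MeasurableSpace ι] {A : ι → Set α} (hA : ∀ i, MeasurableSet (A i)) :
    ∃ Z : α → ι, Measurable Z ∧ ∀ x, (∃ i, x ∈ A i) → x ∈ A (Z x) := by
  classical
  let select (v : ι → Prop) : ι := if h : ∃ i, v i then h.choose else Classical.arbitrary ι
  have hmem : Measurable fun x i ↦ x ∈ A i := measurable_pi_lambda _ fun i ↦ measurable_mem.2 (hA i)
  refine ⟨fun x ↦ select fun i ↦ x ∈ A i, (measurable_of_finite select).comp hmem, fun x hx ↦ ?_⟩
  simp only [select, dif_pos hx]
  exact hx.choose_spec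

section FiltrationApproximation

variable {α κ : Type*} {mα : MeasurableSpace α} {ρ : Measure α} {ℱ : Filtration ℕ mα}

theorem isSetAlgebra_filtration (ℱ : Filtration ℕ mα) :
    IsSetAlgebra {s | ∃ N, MeasurableSet[ℱ N] s} where
  empty_mem := ⟨0, @MeasurableSet.empty _ (ℱ 0)⟩
  compl_mem := fun _ ⟨N, hs⟩ ↦ ⟨N, hs.compl⟩
  union_mem := fun _ _ ⟨N, hs⟩ ⟨M, ht⟩ ↦ ⟨max N M,
    (ℱ.mono (le_max_left N M) _ hs).union (ℱ.mono (le_max_right N M) _ ht)⟩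

theorem exists_measurableSet_filtration_measure_symmDiff_lt [IsFiniteMeasure ρ]
    (hℱ : mα ≤ ⨆ N, ℱ N) {s : Set α} (hs : MeasurableSet s) {δ : ℝ} (hδ : 0 < δ) :
    ∃ (N : ℕ) (t : Set α), MeasurableSet[ℱ N] t ∧ ρ (symmDiff s t) < ENNReal.ofReal δ := by
  have hgen : mα = MeasurableSpace.generateFrom {s | ∃ N, MeasurableSet[ℱ N] s} := by
    rw [Set.ofPred_exists]
    exact (le_antisymm hℱ (iSup_le ℱ.le)).trans
      (MeasurableSpace.generateFrom_iUnion_measurableSet ℱ).symm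
  obtain ⟨t, ⟨N, ht⟩, hlt⟩ := (Measure.MeasureDense.of_generateFrom_isSetAlgebra_finite ρ
    (isSetAlgebra_filtration ℱ) hgen).approx s hs (measure_ne_top ρ s) δ hδ
  exact ⟨N, t, ht, hlt⟩

theorem exists_measurable_filtration_measureReal_ne_le [IsFiniteMeasure ρ] [Finite κ]
    [Nonempty κ] [MeasurableSpace κ] [MeasurableSingletonClass κ] (hℱ : mα ≤ ⨆ N, ℱ N)
    {Z : α → κ} (hZ : Measurable Z) {δ : ℝ} (hδ : 0 < δ) :
    ∃ (N : ℕ) (Z' : α → κ), Measurable[ℱ N] Z' ∧ ρ.real {x | Z x ≠ Z' x} ≤ δ := by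
  have := Fintype.ofFinite κ
  choose N t ht hlt using fun i ↦ exists_measurableSet_filtration_measure_symmDiff_lt (ρ := ρ) hℱ
    (hZ (measurableSet_singleton i)) (show 0 < δ / Fintype.card κ by positivity)
  set M := Finset.univ.sup N
  obtain ⟨Z', hZ', hZt⟩ := @exists_measurable_mem _ _ (ℱ M) _ _ _ t fun i ↦
    ℱ.mono (Finset.le_sup (Finset.mem_univ i)) _ (ht i)
  refine ⟨M, Z', hZ', ?_⟩
  have hsub : {x | Z x ≠ Z' x} ⊆ ⋃ i, symmDiff (Z ⁻¹' {i}) (t i) := by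
    intro x hx
    by_contra hnot
    have hiff (i : κ) : Z x = i ↔ x ∈ t i := by
      have := fun h ↦ hnot (Set.mem_iUnion.2 ⟨i, h⟩)
      simp only [Set.mem_symmDiff, Set.mem_preimage, Set.mem_singleton_iff] at this
      tauto
    exact hx ((hiff _).2 (hZt x ⟨Z x, (hiff _).1 rfl⟩))
  calc ρ.real {x | Z x ≠ Z' x}
      ≤ ∑ i, ρ.real (symmDiff (Z ⁻¹' {i}) (t i)) :=
        (measureReal_mono hsub).trans (measureReal_iUnion_fintype_le _)
    _ ≤ ∑ _i : κ, δ / Fintype.card κ := Finset.sum_le_sum fun i _ ↦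
        ENNReal.toReal_le_of_le_ofReal (by positivity) (hlt i).le
    _ = δ := by simp [mul_div_cancel₀]

end FiltrationApproximation

section Itinerary

variable {α ι κ σ : Type*}

/-- The `N`-name of `x`: the symbols that `X` reads along the first `N` points of the orbit of `x`
under `T`. -/
def itinerary (T : α → α) (X : α → ι) (N : ℕ) (x : α) : Fin N → ι :=
  fun k ↦ X (T^[k] x)

theorem itinerary_succ (T : α → α) (X : α → ι) (N : ℕ) (x : α) :
    itinerary T X (N + 1) x = Fin.cons (X x) (itinerary T X N (T x)) := by
  ext k
  cases k using Fin.cases <;> simp [itinerary]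

theorem comp_castLE_itinerary (T : α → α) (X : α → ι) {N M : ℕ} (h : N ≤ M) (x : α) :
    itinerary T X M x ∘ Fin.castLE h = itinerary T X N x :=
  rfl

variable [mα : MeasurableSpace α] [MeasurableSpace ι] [MeasurableSpace κ] {ρ : Measure α}
  {T : α → α} {X : α → ι}

theorem measurable_itinerary (hT : Measurable T) (hX : Measurable X) (N : ℕ) :
    Measurable (itinerary T X N) :=
  measurable_pi_lambda _ fun k ↦ hX.comp (hT.iterate k)

/-- The observable `X` is a one-sided generator of `T`: the itineraries of all finite lengths
generate the σ-algebra. -/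
def IsGenerator (T : α → α) (X : α → ι) : Prop :=
  mα ≤ ⨆ N, MeasurableSpace.comap (itinerary T X N) inferInstance

/-- The filtration whose `N`-th σ-algebra is generated by the itinerary of length `N`. -/
def itineraryFiltration (hT : Measurable T) (hX : Measurable X) : Filtration ℕ mα where
  seq N := MeasurableSpace.comap (itinerary T X N) inferInstance
  mono' N M h := by
    have hres : Measurable fun v : Fin M → ι ↦ v ∘ Fin.castLE h :=
      measurable_pi_lambda _ fun k ↦ measurable_pi_apply _
    exact (hres.comp (comap_measurable (itinerary T X M))).comap_le
  le' N := (measurable_itinerary hT hX N).comap_le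

variable [Fintype κ] [MeasurableSingletonClass κ] [IsProbabilityMeasure ρ]

theorem IsGenerator.exists_decode (hgen : IsGenerator T X) (hT : Measurable T)
    (hX : Measurable X) [Nonempty κ] {Z : α → κ} (hZ : Measurable Z) {ε : ℝ} (hε : 0 < ε) :
    ∃ (N : ℕ) (e : α → κ) (ψ : κ → (Fin N → ι) → κ), Measurable e ∧ shannonEntropy ρ e ≤ ε ∧
      ∀ x, Z x = ψ (e x) (itinerary T X N x) := by
  -- An arbitrary group structure lets `e` be the error `Z - Z'` of an approximation of `Z`.
  let _ : AddGroup κ := (Fintype.equivFin κ).addGroup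
  obtain ⟨δ, hδ, hsmall⟩ := exists_shannonEntropy_le_of_measureReal_ne_le ρ (0 : κ) hε
  obtain ⟨N, Z', hZ', hne⟩ := exists_measurable_filtration_measureReal_ne_le (ρ := ρ)
    (ℱ := itineraryFiltration hT hX) hgen hZ hδ
  obtain ⟨F, hF, rfl⟩ := hZ'.exists_eq_measurable_comp
  have he : Measurable fun x ↦ Z x - F (itinerary T X N x) :=
    (measurable_of_finite fun u : κ × κ ↦ u.1 - u.2).comp
      (hZ.prodMk (hF.comp (measurable_itinerary hT hX N)))
  refine ⟨N, _, fun u v ↦ u + F v, he, hsmall _ he ?_, fun x ↦ (sub_add_cancel _ _).symm⟩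
  simpa [sub_eq_zero] using hne

variable [Fintype ι] [MeasurableSingletonClass ι]

theorem shannonEntropy_itinerary_le (hT : MeasurePreserving T ρ ρ) (hX : Measurable X) (N : ℕ) :
    shannonEntropy ρ (itinerary T X N) ≤ N * shannonEntropy ρ X := by
  induction N with
  | zero =>
    have huniv : itinerary T X 0 ⁻¹' {default} = Set.univ :=
      Set.eq_univ_of_forall fun x ↦ Subsingleton.elim _ _
    simp [shannonEntropy, huniv]
  | succ N ih =>
    have hN := measurable_itinerary hT.measurable hX N
    have hcons := shannonEntropy_uncurry_comp_le (ρ := ρ) hX (hN.comp hT.measurable)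
      (Fin.cons (α := fun _ ↦ ι))
    rw [shannonEntropy_comp_measurePreserving hT hN] at hcons
    simp only [Function.comp_apply] at hcons
    rw [funext (itinerary_succ T X N)]
    push_cast
    linarith

theorem shannonEntropy_itinerary_mono (hT : Measurable T) (hX : Measurable X) {N M : ℕ}
    (h : N ≤ M) : shannonEntropy ρ (itinerary T X N) ≤ shannonEntropy ρ (itinerary T X M) :=
  shannonEntropy_comp_le (measurable_itinerary hT hX M) (· ∘ Fin.castLE h)

theorem shannonEntropy_itinerary_add_le (hT : MeasurePreserving T ρ ρ) (hX : Measurable X)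
    {N : ℕ} {e : α → κ} (he : Measurable e) {ψ : κ → (Fin N → ι) → ι}
    (hψ : ∀ᵐ x ∂ρ, X x = ψ (e x) (itinerary T X N (T x))) (L : ℕ) :
    shannonEntropy ρ (itinerary T X (N + L)) ≤
      shannonEntropy ρ (itinerary T X N) + L * shannonEntropy ρ e := by
  induction L with
  | zero => simp
  | succ L ih =>
    have hNL := measurable_itinerary hT.measurable hX (N + L)
    have hdecode : itinerary T X (N + L + 1) =ᵐ[ρ] fun x ↦
        (fun (u : κ) (v : Fin (N + L) → ι) ↦
          Fin.cons (α := fun _ ↦ ι) (ψ u (v ∘ Fin.castLE (Nat.le_add_right N L))) v)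
        (e x) (itinerary T X (N + L) (T x)) := by
      filter_upwards [hψ] with x hx
      rw [itinerary_succ, hx, comp_castLE_itinerary]
    have hle := shannonEntropy_uncurry_comp_le (ρ := ρ) he (hNL.comp hT.measurable)
      fun (u : κ) (v : Fin (N + L) → ι) ↦
        Fin.cons (α := fun _ ↦ ι) (ψ u (v ∘ Fin.castLE (Nat.le_add_right N L))) v
    rw [shannonEntropy_comp_measurePreserving hT hNL] at hle
    rw [← add_assoc, shannonEntropy_congr_ae hdecode]
    push_cast
    exact hle.trans (by linarith)

theorem shannonEntropy_itinerary_le_of_eq_decode [Fintype σ] (hT : MeasurePreserving T ρ ρ)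
    (hX : Measurable X) {M : ℕ} {Z : α → σ} {e : α → κ} (he : Measurable e)
    {ψ : κ → (Fin M → ι) → σ} (hψ : ∀ x, Z x = ψ (e x) (itinerary T X M x)) (L : ℕ) :
    shannonEntropy ρ (itinerary T Z L) ≤
      shannonEntropy ρ (itinerary T X (M + L)) + L * shannonEntropy ρ e := by
  let decode (v : Fin (M + L) → ι) (u : Fin L → κ) (k : Fin L) : σ :=
    ψ (u k) fun j ↦ v ⟨j + k, by lia⟩
  have hdecode : itinerary T Z L =
      fun x ↦ decode (itinerary T X (M + L) x) (itinerary T e L x) := by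
    ext x k
    simp only [itinerary, hψ, decode, Function.iterate_add_apply]
    rfl
  rw [hdecode]
  have hle := shannonEntropy_uncurry_comp_le (ρ := ρ)
    (measurable_itinerary hT.measurable hX (M + L))
    (measurable_itinerary hT.measurable he L) decode
  exact hle.trans (by gcongr; exact shannonEntropy_itinerary_le hT he L)

end Itinerary

section KSEntropy

variable {α ι : Type*} [mα : MeasurableSpace α] {ρ : Measure α} {T : α → α}

theorem IsFinMeasPartition.exists_measurable_mem_iff_eq {q : ℕ} [NeZero q] {P : Fin q → Set α}
    (hP : IsFinMeasPartition ρ P) :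
    ∃ Z : α → Fin q, Measurable Z ∧ ∀ᵐ x ∂ρ, ∀ i, x ∈ P i ↔ Z x = i := by
  obtain ⟨hmeas, hdisj, hcover⟩ := hP
  obtain ⟨Z, hZ, hZP⟩ := exists_measurable_mem hmeas
  refine ⟨Z, hZ, ?_⟩
  filter_upwards [measure_eq_zero_iff_ae_notMem.1 hcover] with x hx i
  have hxZ : x ∈ P (Z x) := hZP x (Set.mem_iUnion.1 (not_not.1 hx))
  refine ⟨fun hi ↦ ?_, fun h ↦ h ▸ hxZ⟩
  by_contra hne
  exact Set.disjoint_left.1 (hdisj hne) hxZ hi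

theorem finPartitionEntropy_refinedPartition {q : ℕ} {P : Fin q → Set α} {Z : α → Fin q}
    (hT : MeasurePreserving T ρ ρ) (hZ : ∀ᵐ x ∂ρ, ∀ i, x ∈ P i ↔ Z x = i) (L : ℕ) :
    finPartitionEntropy ρ (refinedPartition T P L) =
      ENNReal.ofReal (shannonEntropy ρ (itinerary T Z L)) := by
  have horbit : ∀ᵐ x ∂ρ, ∀ k : ℕ, ∀ i, T^[k] x ∈ P i ↔ Z (T^[k] x) = i :=
    ae_all_iff.2 fun k ↦ (hT.iterate k).quasiMeasurePreserving.ae hZ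
  refine congrArg ENNReal.ofReal (Finset.sum_congr rfl fun f _ ↦ congrArg Real.negMulLog ?_)
  refine measureReal_congr ?_
  filter_upwards [horbit] with x hx
  change (x ∈ refinedPartition T P L f) = (itinerary T Z L x = f)
  simp only [refinedPartition, Set.mem_iInter, Set.mem_preimage, hx, funext_iff, itinerary]

theorem iInf_ofReal_div_le {H : ℕ → ℝ} {c ε : ℝ} (hε : 0 < ε) (hH : ∀ L : ℕ, H L ≤ c + L * ε) :
    ⨅ L : ℕ, ENNReal.ofReal (H (L + 1)) / (L + 1 : ℝ≥0∞) ≤ ENNReal.ofReal (2 * ε) := by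
  obtain ⟨L, hL⟩ := exists_nat_ge (c / ε)
  rw [div_le_iff₀ hε] at hL
  refine (iInf_le _ L).trans (ENNReal.div_le_of_le_mul ?_)
  have hcast : (L + 1 : ℝ≥0∞) = ENNReal.ofReal (L + 1) := by
    rw [ENNReal.ofReal_add (by positivity) zero_le_one, ENNReal.ofReal_natCast, ENNReal.ofReal_one]
  rw [hcast, ← ENNReal.ofReal_mul (by positivity)]
  have hLH := hH (L + 1)
  push_cast at hLH
  exact ENNReal.ofReal_le_ofReal (by linarith)

theorem ksEntropy_eq_zero_of_forall_itinerary_le [IsProbabilityMeasure ρ]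
    (hT : MeasurePreserving T ρ ρ)
    (h : ∀ (q : ℕ) [NeZero q] (Z : α → Fin q), Measurable Z → ∀ ε : ℝ, 0 < ε →
      ∃ c : ℝ, ∀ L : ℕ, shannonEntropy ρ (itinerary T Z L) ≤ c + L * ε) :
    ksEntropy T ρ = 0 := by
  refine le_antisymm (iSup_le fun q ↦ iSup_le fun P ↦ iSup_le fun hP ↦ ?_) bot_le
  have : NeZero q := ⟨by rintro rfl; simpa using hP.2.2⟩
  obtain ⟨Z, hZ, hZP⟩ := hP.exists_measurable_mem_iff_eq
  simp only [finPartitionEntropy_refinedPartition hT hZP]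
  refine ENNReal.le_of_forall_pos_le_add fun ε hε _ ↦ ?_
  obtain ⟨c, hc⟩ := h q Z hZ (ε / 2) (by positivity)
  refine (iInf_ofReal_div_le (by positivity) hc).trans_eq ?_
  rw [zero_add, mul_div_cancel₀ _ two_ne_zero, ENNReal.ofReal_coe_nnreal]

/-- Once the first `N` symbols are known, each earlier symbol of the itinerary costs only the
entropy of the error made in reconstructing it from its successors. -/
theorem IsGenerator.ksEntropy_eq_zero [Finite ι] [Nonempty ι] [MeasurableSpace ι]
    [MeasurableSingletonClass ι] [IsProbabilityMeasure ρ] {X Y : α → ι} (hgen : IsGenerator T X)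
    (hT : MeasurePreserving T ρ ρ) (hX : Measurable X) (hY : Measurable Y)
    (hXY : X =ᵐ[ρ] Y ∘ T) : ksEntropy T ρ = 0 := by
  have := Fintype.ofFinite ι
  refine ksEntropy_eq_zero_of_forall_itinerary_le hT fun q _ Z hZ ε hε ↦ ?_
  obtain ⟨N, e, ψ, he, heε, hYψ⟩ :=
    hgen.exists_decode (ρ := ρ) hT.measurable hX hY (half_pos hε)
  obtain ⟨M, d, φ, hd, hdε, hZφ⟩ :=
    hgen.exists_decode (ρ := ρ) hT.measurable hX hZ (half_pos hε)
  have hXψ : ∀ᵐ x ∂ρ, X x = ψ ((e ∘ T) x) (itinerary T X N (T x)) :=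
    hXY.mono fun x hx ↦ hx.trans (hYψ (T x))
  refine ⟨shannonEntropy ρ (itinerary T X N) + M * (ε / 2), fun L ↦ ?_⟩
  calc shannonEntropy ρ (itinerary T Z L)
      ≤ shannonEntropy ρ (itinerary T X (M + L)) + L * shannonEntropy ρ d :=
        shannonEntropy_itinerary_le_of_eq_decode hT hX hd hZφ L
    _ ≤ shannonEntropy ρ (itinerary T X (N + (M + L))) + L * (ε / 2) := by
        gcongr
        exact shannonEntropy_itinerary_mono hT.measurable hX (Nat.le_add_left _ _)
    _ ≤ shannonEntropy ρ (itinerary T X N) + (M + L : ℕ) * (ε / 2) + L * (ε / 2) := by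
        gcongr
        refine (shannonEntropy_itinerary_add_le hT hX (he.comp hT.measurable) hXψ (M + L)).trans ?_
        rw [shannonEntropy_comp_measurePreserving hT he]
        gcongr
    _ = shannonEntropy ρ (itinerary T X N) + M * (ε / 2) + L * ε := by push_cast; ring

end KSEntropy

section InverseBranches

/-- A measurable system of inverse branches of `T` indexed by `ι`: the preimages of `x` are the
points `branch i x`, and `symbol y` is the index of the branch that recovers `y` from `T y`. -/
structure InverseBranches {α : Type*} [MeasurableSpace α] (T : α → α) (ι : Type*)
    [MeasurableSpace ι] where
  branch : ι → α → α
  symbol : α → ι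
  measurable_branch (i : ι) : Measurable (branch i)
  measurable_symbol : Measurable symbol
  apply_branch (i : ι) (x : α) : T (branch i x) = x
  symbol_branch (i : ι) (x : α) : symbol (branch i x) = i
  branch_symbol (y : α) : branch (symbol y) (T y) = y

namespace InverseBranches

variable {α ι : Type*} [MeasurableSpace α] [MeasurableSpace ι] {T : α → α}
  (b : InverseBranches T ι)

section Transfer

variable [Fintype ι]

/-- The transfer operator of `T` without weights: `f` is summed over the preimages of a point. -/
def transfer (R : Type*) [Semiring R] : Module.End R (α → R) where
  toFun f x := ∑ i, f (b.branch i x)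
  map_add' _ _ := funext fun _ ↦ Finset.sum_add_distrib
  map_smul' _ _ := funext fun _ ↦ (Finset.mul_sum _ _ _).symm

theorem transfer_apply {R : Type*} [Semiring R] (f : α → R) (x : α) :
    b.transfer R f x = ∑ i, f (b.branch i x) :=
  rfl

theorem transfer_pow_comp_ringHom {R S : Type*} [Semiring R] [Semiring S] (φ : R →+* S) (N : ℕ)
    (f : α → R) : (b.transfer S ^ N) (φ ∘ f) = φ ∘ (b.transfer R ^ N) f := by
  induction N generalizing f with
  | zero => rfl
  | succ N ih =>
    have hcomm : b.transfer S (φ ∘ f) = φ ∘ b.transfer R f :=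
      funext fun x ↦ (map_sum φ _ _).symm
    rw [pow_succ, pow_succ, Module.End.mul_apply, Module.End.mul_apply, hcomm, ih]

theorem transfer_pow_comp_iterate_mul {R : Type*} [Semiring R] (N : ℕ) (g f : α → R) :
    (b.transfer R ^ N) (g ∘ T^[N] * f) = g * (b.transfer R ^ N) f := by
  induction N generalizing f with
  | zero => rfl
  | succ N ih =>
    have hpull : b.transfer R (g ∘ T^[N + 1] * f) = g ∘ T^[N] * b.transfer R f := by
      ext x
      simp [transfer_apply, b.apply_branch, Finset.mul_sum]
    rw [pow_succ, Module.End.mul_apply, Module.End.mul_apply, hpull, ih]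

theorem monotone_transfer_pow (N : ℕ) : Monotone (b.transfer ℝ≥0∞ ^ N) := by
  have hmono : Monotone (b.transfer ℝ≥0∞) := fun f h hfh x ↦
    Finset.sum_le_sum fun i _ ↦ hfh (b.branch i x)
  rw [Module.End.coe_pow]
  exact hmono.iterate N

theorem measurable_transfer_pow {f : α → ℝ≥0∞} (hf : Measurable f) (N : ℕ) :
    Measurable ((b.transfer ℝ≥0∞ ^ N) f) := by
  induction N generalizing f with
  | zero => exact hf
  | succ N ih =>
    rw [pow_succ]
    exact ih (Finset.measurable_sum _ fun i _ ↦ hf.comp (b.measurable_branch i))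

end Transfer

/-- The conditional probability, given `T y = x`, that `y` is the `i`-th preimage of `x`. The
truncation at `1` changes it only on a null set. -/
noncomputable def weight (ρ : Measure α) (i : ι) (x : α) : ℝ≥0∞ :=
  min (((ρ.restrict (b.symbol ⁻¹' {i})).map T).rnDeriv ρ x) 1

/-- The `g`-function of `ρ`: the conditional probability of `y` among the preimages of `T y`. -/
noncomputable def gFunction (ρ : Measure α) (y : α) : ℝ≥0∞ :=
  b.weight ρ (b.symbol y) (T y)

variable {ρ : Measure α}

theorem measurable_weight (i : ι) : Measurable (b.weight ρ i) :=
  (Measure.measurable_rnDeriv _ _).min measurable_const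

theorem gFunction_le_one (y : α) : b.gFunction ρ y ≤ 1 :=
  min_le_right _ _

theorem gFunction_branch (i : ι) (x : α) : b.gFunction ρ (b.branch i x) = b.weight ρ i x := by
  rw [gFunction, b.symbol_branch, b.apply_branch]

theorem lintegral_weight_mul [SigmaFinite ρ] (hT : MeasurePreserving T ρ ρ) (i : ι)
    {f : α → ℝ≥0∞} (hf : Measurable f) :
    ∫⁻ x, b.weight ρ i x * f x ∂ρ = ∫⁻ y in b.symbol ⁻¹' {i}, f (T y) ∂ρ := by
  have hle : (ρ.restrict (b.symbol ⁻¹' {i})).map T ≤ ρ :=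
    (Measure.map_mono Measure.restrict_le_self hT.measurable).trans_eq hT.map_eq
  have : SigmaFinite ((ρ.restrict (b.symbol ⁻¹' {i})).map T) := Measure.sigmaFinite_of_le ρ hle
  rw [← lintegral_map hf hT.measurable,
    ← lintegral_rnDeriv_mul (Measure.absolutelyContinuous_of_le hle) hf.aemeasurable]
  refine lintegral_congr_ae ?_
  filter_upwards [Measure.rnDeriv_le_one_of_le hle] with x hx
  rw [weight, min_eq_left (by simpa using hx)]

variable [MeasurableSingletonClass ι]

theorem measurableSet_symbol (i : ι) : MeasurableSet (b.symbol ⁻¹' {i}) :=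
  b.measurable_symbol (measurableSet_singleton i)

theorem ae_symbol_eq_of_weight_eq_one [IsFiniteMeasure ρ] (hT : MeasurePreserving T ρ ρ) (i : ι) :
    ∀ᵐ y ∂ρ, b.weight ρ i (T y) = 1 → b.symbol y = i := by
  set A : Set α := {x | b.weight ρ i x = 1}
  have hA : MeasurableSet A := b.measurable_weight i (measurableSet_singleton 1)
  have hmul (x : α) : b.weight ρ i x * A.indicator 1 x = A.indicator 1 x := by
    by_cases hx : x ∈ A
    · rw [show b.weight ρ i x = 1 from hx, one_mul]
    · simp [hx]
  have hinter : ρ (T ⁻¹' A ∩ b.symbol ⁻¹' {i}) = ρ (T ⁻¹' A) := calc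
    ρ (T ⁻¹' A ∩ b.symbol ⁻¹' {i})
      = ∫⁻ y in b.symbol ⁻¹' {i}, A.indicator 1 (T y) ∂ρ := by
        rw [← Measure.restrict_apply (hT.measurable hA),
          ← lintegral_indicator_one (hT.measurable hA)]
        rfl
    _ = ∫⁻ x, A.indicator 1 x ∂ρ := by
        simp only [← b.lintegral_weight_mul hT i (measurable_one.indicator hA), hmul]
    _ = ρ (T ⁻¹' A) := by
        rw [lintegral_indicator_one hA, hT.measure_preimage hA.nullMeasurableSet]
  have hnull : ρ (T ⁻¹' A \ b.symbol ⁻¹' {i}) = 0 := by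
    rw [← Set.sdiff_inter_self_eq_sdiff, Set.inter_comm, measure_sdiff Set.inter_subset_left
      ((hT.measurable hA).inter (b.measurableSet_symbol i)).nullMeasurableSet (measure_ne_top _ _),
      hinter, tsub_self]
  filter_upwards [measure_eq_zero_iff_ae_notMem.1 hnull] with y hy hyA
  by_contra hne
  exact hy ⟨hyA, hne⟩

theorem measurable_gFunction [Countable ι] (hT : Measurable T) : Measurable (b.gFunction ρ) :=
  (measurable_from_prod_countable_right (f := fun z : ι × α ↦ b.weight ρ z.1 z.2)
    b.measurable_weight).comp (b.measurable_symbol.prodMk hT)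

theorem measurable_prod_gFunction_iterate [Countable ι] (hT : Measurable T) (N : ℕ) :
    Measurable fun y ↦ ∏ k ∈ Finset.range N, b.gFunction ρ (T^[k] y) :=
  Finset.measurable_prod _ fun k _ ↦ (b.measurable_gFunction hT).comp (hT.iterate k)

theorem exists_measurable_symbol_ae_eq_comp [Finite ι] [Nonempty ι] [IsFiniteMeasure ρ]
    (hT : MeasurePreserving T ρ ρ) (hg : ∀ᵐ y ∂ρ, b.gFunction ρ y = 1) :
    ∃ Y : α → ι, Measurable Y ∧ b.symbol =ᵐ[ρ] Y ∘ T := by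
  obtain ⟨Y, hY, hmem⟩ := exists_measurable_mem (A := fun i ↦ {x | b.weight ρ i x = 1})
    fun i ↦ b.measurable_weight i (measurableSet_singleton 1)
  refine ⟨Y, hY, ?_⟩
  filter_upwards [hg, ae_all_iff.2 (b.ae_symbol_eq_of_weight_eq_one hT)] with y hy hsymbol
  exact hsymbol _ (hmem (T y) ⟨b.symbol y, hy⟩)

variable [Fintype ι]

theorem lintegral_transfer_gFunction_mul [SigmaFinite ρ] (hT : MeasurePreserving T ρ ρ)
    {f : α → ℝ≥0∞} (hf : Measurable f) :
    ∫⁻ x, b.transfer ℝ≥0∞ (b.gFunction ρ * f) x ∂ρ = ∫⁻ x, f x ∂ρ := by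
  have hterm (i : ι) : ∫⁻ x, b.weight ρ i x * f (b.branch i x) ∂ρ =
      ∫⁻ y in b.symbol ⁻¹' {i}, f y ∂ρ := by
    refine (b.lintegral_weight_mul hT i (hf.comp (b.measurable_branch i))).trans ?_
    refine setLIntegral_congr_fun (b.measurableSet_symbol i) fun y hy ↦ ?_
    rw [Function.comp_apply, ← show b.symbol y = i from hy, b.branch_symbol]
  have hdisj : Pairwise (Function.onFun Disjoint fun i ↦ b.symbol ⁻¹' {i}) := fun i j hij ↦
    Disjoint.preimage _ (Set.disjoint_singleton.2 hij)
  simp only [transfer_apply, Pi.mul_apply, gFunction_branch]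
  rw [lintegral_finsetSum (f := fun i x ↦ b.weight ρ i x * f (b.branch i x)) _
    fun i _ ↦ (b.measurable_weight i).mul (hf.comp (b.measurable_branch i))]
  simp only [hterm]
  rw [← tsum_fintype (L := .unconditional ι), ← lintegral_iUnion b.measurableSet_symbol hdisj,
    ← Set.preimage_iUnion, Set.iUnion_of_singleton, Set.preimage_univ, setLIntegral_univ]

theorem lintegral_transfer_pow_prod_gFunction_mul [SigmaFinite ρ] (hT : MeasurePreserving T ρ ρ)
    {f : α → ℝ≥0∞} (hf : Measurable f) (N : ℕ) :
    ∫⁻ x, (b.transfer ℝ≥0∞ ^ N)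
      ((fun y ↦ ∏ k ∈ Finset.range N, b.gFunction ρ (T^[k] y)) * f) x ∂ρ = ∫⁻ x, f x ∂ρ := by
  induction N with
  | zero => simp
  | succ N ih =>
    set G : α → ℝ≥0∞ := fun y ↦ ∏ k ∈ Finset.range N, b.gFunction ρ (T^[k] y)
    have hsucc : (fun y ↦ ∏ k ∈ Finset.range (N + 1), b.gFunction ρ (T^[k] y)) * f =
        b.gFunction ρ ∘ T^[N] * (G * f) := by
      ext y
      simp only [Finset.prod_range_succ, Pi.mul_apply, Function.comp_apply, G]
      ring
    have hmeas : Measurable ((b.transfer ℝ≥0∞ ^ N) (G * f)) :=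
      b.measurable_transfer_pow ((b.measurable_prod_gFunction_iterate hT.measurable N).mul hf) N
    rw [hsucc, pow_succ', Module.End.mul_apply, transfer_pow_comp_iterate_mul,
      b.lintegral_transfer_gFunction_mul hT hmeas, ih]

theorem setLIntegral_prod_gFunction_le [SigmaFinite ρ] (hT : MeasurePreserving T ρ ρ)
    {f : α → ℝ≥0∞} (hf : Measurable f) (N : ℕ) (t : ℝ≥0∞) :
    ∫⁻ y in {y | ∏ k ∈ Finset.range N, b.gFunction ρ (T^[k] y) ≤ t}, f y ∂ρ ≤
      t * ∫⁻ x, (b.transfer ℝ≥0∞ ^ N) f x ∂ρ := by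
  set G : α → ℝ≥0∞ := fun y ↦ ∏ k ∈ Finset.range N, b.gFunction ρ (T^[k] y)
  have hS : MeasurableSet {y | G y ≤ t} :=
    measurableSet_le (b.measurable_prod_gFunction_iterate hT.measurable N) measurable_const
  have hle : G * {y | G y ≤ t}.indicator f ≤ t • f := by
    intro y
    by_cases hy : G y ≤ t
    · simpa [hy] using mul_le_mul_left hy (f y)
    · simp [hy]
  rw [← lintegral_indicator hS,
    ← b.lintegral_transfer_pow_prod_gFunction_mul hT (hf.indicator hS) N,
    ← lintegral_const_mul _ (b.measurable_transfer_pow hf N)]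
  refine lintegral_mono ((b.monotone_transfer_pow N hle).trans_eq ?_)
  rw [map_smul]
  rfl

end InverseBranches

end InverseBranches

section AlmostEverywhereDecay

variable {α : Type*} [MeasurableSpace α] {ρ : Measure α} {T : α → α}

theorem exists_measure_le_ofReal_ne_zero {g : α → ℝ≥0∞} (hg : ¬ ∀ᵐ x ∂ρ, 1 ≤ g x) :
    ∃ c ∈ Set.Ioo (0 : ℝ) 1, ρ {x | g x ≤ ENNReal.ofReal c} ≠ 0 := by
  by_contra! hnull
  obtain ⟨u, -, hu, hulim⟩ := exists_seq_strictMono_tendsto' (zero_lt_one' ℝ)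
  refine hg ?_
  filter_upwards [ae_all_iff.2 fun k ↦ measure_eq_zero_iff_ae_notMem.1 (hnull (u k) (hu k))]
    with x hx
  refine le_of_tendsto' (x := atTop) (f := fun k ↦ ENNReal.ofReal (u k)) ?_ fun k ↦
    (not_le.1 (hx k)).le
  simpa using ENNReal.tendsto_ofReal hulim

theorem exists_eventually_prod_iterate_le_pow [IsProbabilityMeasure ρ] (hT : Ergodic T ρ)
    {g : α → ℝ≥0∞} (hg : Measurable g) (hg₁ : ∀ x, g x ≤ 1) (hne : ¬ ∀ᵐ x ∂ρ, g x = 1) :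
    ∃ θ ∈ Set.Ioo (0 : ℝ) 1, ∀ᵐ x ∂ρ, ∀ᶠ N : ℕ in atTop,
      ∏ k ∈ Finset.range N, g (T^[k] x) ≤ ENNReal.ofReal (θ ^ N) := by
  obtain ⟨c, ⟨hc₀, hc₁⟩, hc⟩ := exists_measure_le_ofReal_ne_zero
    fun h ↦ hne (h.mono fun x hx ↦ (hg₁ x).antisymm hx)
  set A : Set α := {x | g x ≤ ENNReal.ofReal c}
  obtain ⟨η, hη, hvisit⟩ := exists_eventually_mul_le_birkhoffSum_indicator hT
    (measurableSet_le hg measurable_const) hc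
  refine ⟨c ^ η, ⟨Real.rpow_pos_of_pos hc₀ η, Real.rpow_lt_one hc₀.le hc₁ hη⟩, ?_⟩
  have hgc (y : α) : g y ≤ ENNReal.ofReal (c ^ A.indicator (fun _ ↦ (1 : ℝ)) y) := by
    by_cases hy : y ∈ A
    · rw [Set.indicator_of_mem hy, Real.rpow_one]
      exact hy
    · simpa [hy] using hg₁ y
  filter_upwards [hvisit] with x hx
  filter_upwards [hx] with N hN
  calc ∏ k ∈ Finset.range N, g (T^[k] x)
      ≤ ENNReal.ofReal (c ^ birkhoffSum T (A.indicator fun _ ↦ (1 : ℝ)) N x) := by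
        rw [birkhoffSum, Real.rpow_sum_of_pos hc₀,
          ENNReal.ofReal_prod_of_nonneg fun k _ ↦ Real.rpow_nonneg hc₀.le _]
        exact Finset.prod_le_prod' fun k _ ↦ hgc _
    _ ≤ ENNReal.ofReal ((c ^ η) ^ N) := by
        rw [← Real.rpow_natCast, ← Real.rpow_mul hc₀.le]
        exact ENNReal.ofReal_le_ofReal (Real.rpow_le_rpow_of_exponent_ge hc₀ hc₁.le hN)

theorem ae_tendsto_zero_of_tsum_setLIntegral_ne_top {W : ℕ → α → ℝ≥0∞}
    (hW : ∀ j, Measurable (W j)) {S : ℕ → Set α} (hS : ∀ j, MeasurableSet (S j))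
    (hsum : ∑' j, ∫⁻ x in S j, W j x ∂ρ ≠ ∞) (hmem : ∀ᵐ x ∂ρ, ∀ᶠ j in atTop, x ∈ S j) :
    ∀ᵐ x ∂ρ, Tendsto (fun j ↦ W j x) atTop (nhds 0) := by
  have hmeas (j : ℕ) : Measurable ((S j).indicator (W j)) := (hW j).indicator (hS j)
  have hfin : ∀ᵐ x ∂ρ, ∑' j, (S j).indicator (W j) x < ∞ := by
    refine ae_lt_top (Measurable.tsum hmeas) ?_
    simpa only [lintegral_tsum fun j ↦ (hmeas j).aemeasurable, lintegral_indicator (hS _)]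
      using hsum
  filter_upwards [hfin, hmem] with x hx hxS
  refine (ENNReal.tendsto_atTop_zero_of_tsum_ne_top hx.ne).congr' ?_
  filter_upwards [hxS] with j hj
  exact Set.indicator_of_mem hj _

theorem tendsto_atTop_of_tendsto_pow_zero {θ : ℝ} (hθ₀ : 0 < θ) (hθ₁ : θ < 1) {N : ℕ → ℕ}
    (h : Tendsto (fun j ↦ θ ^ N j) atTop (nhds 0)) : Tendsto N atTop atTop :=
  tendsto_atTop.2 fun b ↦ (h.eventually_lt_const (pow_pos hθ₀ b)).mono fun _ hj ↦
    ((pow_lt_pow_iff_right_of_lt_one₀ hθ₀ hθ₁).1 hj).le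

/-- Positive entropy forbids `g = 1` almost everywhere, so by ergodicity the weights of the branches
of `T^[N]` decay exponentially in `N` along almost every orbit. -/
theorem InverseBranches.ae_tendsto_zero_of_transfer_pow_le {ι : Type*} [Fintype ι] [Nonempty ι]
    [MeasurableSpace ι] [MeasurableSingletonClass ι] [IsProbabilityMeasure ρ]
    (b : InverseBranches T ι) (hgen : IsGenerator T b.symbol) (hT : Ergodic T ρ)
    (hent : ksEntropy T ρ ≠ 0) {W : ℕ → α → ℝ≥0∞} (hW : ∀ j, Measurable (W j)) {N : ℕ → ℕ}
    (hN : ∀ θ ∈ Set.Ioo (0 : ℝ) 1, Summable fun j ↦ θ ^ N j) {B : ℝ≥0∞} (hB : B ≠ ∞)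
    (hWB : ∀ j x, (b.transfer ℝ≥0∞ ^ N j) (W j) x ≤ B) :
    ∀ᵐ x ∂ρ, Tendsto (fun j ↦ W j x) atTop (nhds 0) := by
  have hTρ := hT.toMeasurePreserving
  have hne : ¬ ∀ᵐ y ∂ρ, b.gFunction ρ y = 1 := fun hg ↦ by
    obtain ⟨Y, hY, hXY⟩ := b.exists_measurable_symbol_ae_eq_comp hTρ hg
    exact hent (hgen.ksEntropy_eq_zero hTρ b.measurable_symbol hY hXY)
  obtain ⟨θ, hθ, hdecay⟩ := exists_eventually_prod_iterate_le_pow hT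
    (b.measurable_gFunction hTρ.measurable) b.gFunction_le_one hne
  have hNtop : Tendsto N atTop atTop :=
    tendsto_atTop_of_tendsto_pow_zero hθ.1 hθ.2 (hN θ hθ).tendsto_atTop_zero
  refine ae_tendsto_zero_of_tsum_setLIntegral_ne_top hW
    (S := fun j ↦ {y | ∏ k ∈ Finset.range (N j), b.gFunction ρ (T^[k] y) ≤
      ENNReal.ofReal (θ ^ N j)})
    (fun j ↦ measurableSet_le (b.measurable_prod_gFunction_iterate hTρ.measurable _)
      measurable_const) ?_ (hdecay.mono fun x hx ↦ hNtop.eventually hx)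
  have hle (j : ℕ) := calc
    ∫⁻ y in {y | ∏ k ∈ Finset.range (N j), b.gFunction ρ (T^[k] y) ≤ ENNReal.ofReal (θ ^ N j)},
        W j y ∂ρ
      ≤ ENNReal.ofReal (θ ^ N j) * ∫⁻ x, (b.transfer ℝ≥0∞ ^ N j) (W j) x ∂ρ :=
        b.setLIntegral_prod_gFunction_le hTρ (hW j) _ _
    _ ≤ ENNReal.ofReal (θ ^ N j) * B := by
        gcongr
        exact (lintegral_mono (hWB j)).trans_eq (by simp)
  refine ne_top_of_le_ne_top ?_ (ENNReal.tsum_le_tsum hle)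
  rw [ENNReal.tsum_mul_right]
  exact ENNReal.mul_ne_top (hN θ hθ).tsum_ofReal_ne_top hB

end AlmostEverywhereDecay

section CircleDigits

/-- The representative of a point of `ℝ / ℤ` in `[0, 1)`. -/
noncomputable def circleRep (x : UnitAddCircle) : ℝ :=
  AddCircle.equivIco 1 0 x

theorem measurable_circleRep : Measurable circleRep :=
  measurable_subtype_coe.comp (AddCircle.measurableEquivIco 1 0).measurable

theorem circleRep_nonneg (x : UnitAddCircle) : 0 ≤ circleRep x :=
  (AddCircle.equivIco 1 0 x).2.1

theorem circleRep_lt_one (x : UnitAddCircle) : circleRep x < 1 :=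
  (AddCircle.equivIco 1 0 x).2.2.trans_eq (zero_add 1)

theorem coe_circleRep (x : UnitAddCircle) : (circleRep x : UnitAddCircle) = x :=
  AddCircle.coe_equivIco

theorem circleRep_coe {r : ℝ} (h₀ : 0 ≤ r) (h₁ : r < 1) : circleRep r = r :=
  AddCircle.equivIco_coe_of_mem ⟨h₀, h₁.trans_eq (zero_add 1).symm⟩

theorem coe_add_natCast (r : ℝ) (k : ℕ) : ((r + k : ℝ) : UnitAddCircle) = r := by
  have hk : ((k : ℝ) : UnitAddCircle) = 0 := (AddCircle.coe_eq_zero_iff 1).2 ⟨k, by simp⟩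
  rw [AddCircle.coe_add, hk, add_zero]

variable {n : ℕ}

/-- The preimage of `x` under `y ↦ n • y` whose representative lies in `[i / n, (i + 1) / n)`. -/
noncomputable def circleBranch (n : ℕ) (i : Fin n) (x : UnitAddCircle) : UnitAddCircle :=
  ((circleRep x + i) / n : ℝ)

theorem measurable_circleBranch (i : Fin n) : Measurable (circleBranch n i) :=
  AddCircle.measurable_mk'.comp ((measurable_circleRep.add_const _).div_const _)

theorem circleRep_circleBranch (i : Fin n) (x : UnitAddCircle) :
    circleRep (circleBranch n i x) = (circleRep x + i) / n := by
  have hi : (i : ℝ) + 1 ≤ n := by exact_mod_cast i.2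
  have hn : (0 : ℝ) < n := by exact_mod_cast i.pos
  have hx := circleRep_nonneg x
  refine circleRep_coe (by positivity) ?_
  rw [div_lt_one hn]
  linarith [circleRep_lt_one x]

variable [NeZero n]

/-- The first digit of `x` in base `n`. -/
noncomputable def firstDigit (n : ℕ) [NeZero n] (x : UnitAddCircle) : Fin n :=
  ⟨⌊n * circleRep x⌋₊, (Nat.floor_lt (mul_nonneg n.cast_nonneg (circleRep_nonneg x))).2 <|
    mul_lt_of_lt_one_right (Nat.cast_pos.2 (NeZero.pos n)) (circleRep_lt_one x)⟩

theorem circleRep_nsmul (x : UnitAddCircle) :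
    circleRep (n • x) = n * circleRep x - firstDigit n x := by
  have hcoe : n • x = ((n * circleRep x - firstDigit n x : ℝ) : UnitAddCircle) := by
    rw [← coe_add_natCast _ (firstDigit n x), sub_add_cancel, ← nsmul_eq_mul,
      AddCircle.coe_nsmul, coe_circleRep]
  rw [hcoe]
  refine circleRep_coe (sub_nonneg.2 (Nat.floor_le ?_)) (sub_lt_iff_lt_add'.2 ?_)
  · exact mul_nonneg n.cast_nonneg (circleRep_nonneg x)
  · exact Nat.lt_floor_add_one _

/-- The inverse branches of multiplication by `n` on the circle, indexed by the first digit of the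
preimage in base `n`. -/
noncomputable def nsmulBranches (n : ℕ) [NeZero n] :
    InverseBranches (fun x : UnitAddCircle ↦ n • x) (Fin n) where
  branch := circleBranch n
  symbol := firstDigit n
  measurable_branch := measurable_circleBranch
  measurable_symbol := measurable_to_countable' fun i ↦ by
    have hfloor : Measurable fun x ↦ ⌊n * circleRep x⌋₊ :=
      Nat.measurable_floor.comp (measurable_circleRep.const_mul _)
    simpa [Set.preimage, firstDigit, Fin.ext_iff] using hfloor (measurableSet_singleton (i : ℕ))
  apply_branch i x := by
    rw [circleBranch, ← AddCircle.coe_nsmul, nsmul_eq_mul,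
      mul_div_cancel₀ _ (NeZero.ne (n : ℝ)), coe_add_natCast, coe_circleRep]
  symbol_branch i x := by
    refine Fin.ext ?_
    simp only [firstDigit, circleRep_circleBranch]
    rw [mul_div_cancel₀ _ (NeZero.ne (n : ℝ)), Nat.floor_add_natCast (circleRep_nonneg x),
      Nat.floor_eq_zero.2 (circleRep_lt_one x), zero_add]
  branch_symbol y := by
    rw [circleBranch, circleRep_nsmul, sub_add_cancel,
      mul_div_cancel_left₀ _ (NeZero.ne (n : ℝ)), coe_circleRep]

theorem circleRep_eq_sum_add (N : ℕ) (x : UnitAddCircle) :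
    circleRep x = ∑ k ∈ Finset.range N, (firstDigit n ((n • ·)^[k] x) : ℝ) / n ^ (k + 1) +
      circleRep ((n • ·)^[N] x) / n ^ N := by
  have hn := NeZero.ne (n : ℝ)
  induction N with
  | zero => simp
  | succ N ih =>
    rw [Finset.sum_range_succ, Function.iterate_succ_apply', circleRep_nsmul, ih]
    field_simp
    ring

theorem tendsto_sum_firstDigit_div_pow (hn : 2 ≤ n) (x : UnitAddCircle) :
    Tendsto (fun N ↦ ∑ k ∈ Finset.range N, (firstDigit n ((n • ·)^[k] x) : ℝ) / n ^ (k + 1))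
      atTop (nhds (circleRep x)) := by
  have hgeom : Tendsto (fun N : ℕ ↦ ((n : ℝ)⁻¹) ^ N) atTop (nhds 0) :=
    tendsto_pow_atTop_nhds_zero_of_lt_one (by positivity)
      (inv_lt_one_of_one_lt₀ (by exact_mod_cast hn))
  have hrem : Tendsto (fun N ↦ circleRep ((n • ·)^[N] x) / n ^ N) atTop (nhds 0) := by
    refine squeeze_zero (fun N ↦ div_nonneg (circleRep_nonneg _) (by positivity)) (fun N ↦ ?_) hgeom
    rw [inv_pow, div_eq_mul_inv]
    exact mul_le_of_le_one_left (by positivity) (circleRep_lt_one _).le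
  refine (sub_zero (circleRep x) ▸ tendsto_const_nhds.sub hrem).congr fun N ↦ ?_
  rw [circleRep_eq_sum_add (n := n) N x, add_sub_cancel_right]

theorem isGenerator_firstDigit (hn : 2 ≤ n) :
    IsGenerator (fun x : UnitAddCircle ↦ n • x) (firstDigit n) := by
  set 𝒢 : MeasurableSpace UnitAddCircle :=
    ⨆ N, MeasurableSpace.comap (itinerary (n • ·) (firstDigit n) N) inferInstance
  have hpartial (N : ℕ) : Measurable[𝒢] fun x ↦
      ∑ k ∈ Finset.range N, (firstDigit n ((n • ·)^[k] x) : ℝ) / n ^ (k + 1) := by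
    have hdigits : Measurable fun v : Fin N → Fin n ↦ ∑ k, (v k : ℝ) / n ^ ((k : ℕ) + 1) :=
      measurable_of_finite _
    simp only [← Fin.sum_univ_eq_sum_range
      (fun k ↦ (firstDigit n ((n • ·)^[k] _) : ℝ) / n ^ (k + 1)) N]
    exact hdigits.comp ((comap_measurable (itinerary (n • ·) (firstDigit n) N)).mono
      (le_iSup (fun N ↦ MeasurableSpace.comap (itinerary (n • ·) (firstDigit n) N) _) N) le_rfl)
  have hrep : Measurable[𝒢] circleRep :=
    @measurable_of_tendsto_metrizable _ _ 𝒢 _ _ _ _ _ _ hpartial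
      (tendsto_pi_nhds.2 (tendsto_sum_firstDigit_div_pow hn))
  intro s hs
  have hpre : MeasurableSet[𝒢] (circleRep ⁻¹' ((↑) ⁻¹' s : Set ℝ)) :=
    hrep (AddCircle.measurable_mk' hs)
  simpa only [← Set.preimage_comp, Function.comp_def, coe_circleRep, Set.preimage_id'] using hpre

end CircleDigits

section FourierTransfer

variable {n : ℕ}

theorem fourier_circleBranch (a : ℤ) (i : Fin n) (x : UnitAddCircle) :
    (fourier a (circleBranch n i x) : ℂ) =
      Complex.exp (2 * Real.pi * Complex.I * a * circleRep x / n) *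
        (Complex.exp (2 * Real.pi * Complex.I / n) ^ a) ^ (i : ℕ) := by
  rw [circleBranch, fourier_coe_apply, ← Complex.exp_int_mul, ← Complex.exp_nat_mul,
    ← Complex.exp_add]
  congr 1
  push_cast
  field_simp

variable [NeZero n]

theorem transfer_fourier_mul (b : ℤ) :
    (nsmulBranches n).transfer ℂ (fourier (n * b)) = (n : ℂ) • ⇑(fourier b) := by
  ext x
  have hterm (i : Fin n) : fourier (n * b) (circleBranch n i x) = fourier b x := by
    have hi : n • circleBranch n i x = x := (nsmulBranches n).apply_branch i x
    rw [fourier_apply, fourier_apply, mul_comm, mul_smul, natCast_zsmul, hi]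
  simp only [InverseBranches.transfer_apply, nsmulBranches, hterm, Finset.sum_const,
    Finset.card_univ, Fintype.card_fin, nsmul_eq_mul, Pi.smul_apply, smul_eq_mul]

theorem transfer_fourier_of_not_dvd {a : ℤ} (ha : ¬ (n : ℤ) ∣ a) :
    (nsmulBranches n).transfer ℂ (fourier a) = 0 := by
  ext x
  set ζ : ℂ := Complex.exp (2 * Real.pi * Complex.I / n) ^ a
  have hroot := Complex.isPrimitiveRoot_exp n (NeZero.ne n)
  have hζ : ζ ≠ 1 := fun h ↦ ha ((hroot.zpow_eq_one_iff_dvd a).1 h)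
  have hζn : ζ ^ n = 1 := by
    rw [← zpow_natCast, zpow_comm, zpow_natCast, hroot.pow_eq_one, one_zpow]
  have hsum : ∑ i ∈ Finset.range n, ζ ^ i = 0 := by
    rw [geom_sum_eq hζ, hζn, sub_self, zero_div]
  simp only [InverseBranches.transfer_apply, nsmulBranches, fourier_circleBranch]
  rw [← Finset.mul_sum, Fin.sum_univ_eq_sum_range (fun i ↦ ζ ^ i) n, hsum, mul_zero, Pi.zero_apply]

theorem norm_transfer_pow_fourier_le (N : ℕ) (a : ℤ) (x : UnitAddCircle) :
    ‖((nsmulBranches n).transfer ℂ ^ N) (fourier a) x‖ ≤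
      if ((n ^ N : ℕ) : ℤ) ∣ a then ((n ^ N : ℕ) : ℝ) else 0 := by
  induction N generalizing a with
  | zero => simpa using (Circle.norm_coe _).le
  | succ N ih =>
    rw [pow_succ, Module.End.mul_apply]
    by_cases h : (n : ℤ) ∣ a
    · obtain ⟨b, rfl⟩ := h
      have hdvd : ((n ^ (N + 1) : ℕ) : ℤ) ∣ n * b ↔ ((n ^ N : ℕ) : ℤ) ∣ b := by
        rw [pow_succ', Nat.cast_mul, mul_dvd_mul_iff_left (NeZero.ne (n : ℤ))]
      rw [transfer_fourier_mul, map_smul, Pi.smul_apply, norm_smul, Complex.norm_natCast]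
      refine (mul_le_mul_of_nonneg_left (ih b) n.cast_nonneg).trans_eq ?_
      simp only [hdvd, mul_ite, mul_zero, ← Nat.cast_mul, ← pow_succ']
    · rw [transfer_fourier_of_not_dvd h, map_zero, Pi.zero_apply, norm_zero]
      positivity

theorem norm_transfer_pow_sum_fourier_le {κ : Type*} (s : Finset κ) (φ : κ → ℤ) (N : ℕ)
    (x : UnitAddCircle) :
    ‖((nsmulBranches n).transfer ℂ ^ N) (∑ q ∈ s, ⇑(fourier (φ q))) x‖ ≤
      (n ^ N * (s.filter fun q ↦ ((n ^ N : ℕ) : ℤ) ∣ φ q).card : ℕ) := by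
  rw [map_sum, Finset.sum_apply]
  refine (norm_sum_le_of_le s fun q _ ↦ norm_transfer_pow_fourier_le N (φ q) x).trans_eq ?_
  rw [← Finset.sum_filter, Finset.sum_const, nsmul_eq_mul, mul_comm, Nat.cast_mul]

end FourierTransfer

section FourierAverage

/-- The average over `k < K` of the character `fourier a` along the sequence `u`. -/
noncomputable def fourierAverage (u : ℕ → UnitAddCircle) (a : ℤ) (K : ℕ) : ℂ :=
  (K : ℂ)⁻¹ * ∑ k ∈ Finset.range K, fourier a (u k)

theorem ofReal_nnnorm_fourierAverage_sq (u : ℕ → UnitAddCircle) (a : ℤ) (K : ℕ) :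
    (((‖fourierAverage u a K‖₊ ^ 2 : NNReal) : ℝ) : ℂ) =
      ((K : ℂ)⁻¹ ^ 2) * ∑ q ∈ Finset.range K ×ˢ Finset.range K, fourier a (u q.1 - u q.2) := by
  have hterm (q : ℕ × ℕ) : fourier a (u q.1 - u q.2) =
      fourier a (u q.1) * (starRingEnd ℂ) (fourier a (u q.2)) := by
    rw [← fourier_neg, fourier_apply, fourier_apply, fourier_apply, ← Circle.coe_mul,
      ← AddCircle.toCircle_add, neg_smul, smul_sub, sub_eq_add_neg]
  have hconj : (starRingEnd ℂ) (fourierAverage u a K) =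
      (K : ℂ)⁻¹ * ∑ k ∈ Finset.range K, (starRingEnd ℂ) (fourier a (u k)) := by
    simp only [fourierAverage, map_mul, map_inv₀, map_natCast, map_sum]
  rw [NNReal.coe_pow, coe_nnnorm, Complex.ofReal_pow, ← Complex.mul_conj', hconj, fourierAverage,
    mul_mul_mul_comm, ← sq, Finset.sum_mul_sum, ← Finset.sum_product',
    Finset.sum_congr rfl fun q _ ↦ hterm q]

theorem measurable_fourierAverage {α : Type*} [MeasurableSpace α] {u : ℕ → α → UnitAddCircle}
    (hu : ∀ k, Measurable (u k)) (a : ℤ) (K : ℕ) :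
    Measurable fun x ↦ fourierAverage (fun k ↦ u k x) a K :=
  (Finset.measurable_sum _ fun k _ ↦ (fourier a).continuous.measurable.comp (hu k)).const_mul _

theorem fourier_nsmul_sub_nsmul (a : ℤ) (k l : ℕ) (x : UnitAddCircle) :
    (fourier a (k • x - l • x) : ℂ) = fourier (a * (k - l)) x := by
  rw [fourier_apply, fourier_apply, ← natCast_zsmul, ← natCast_zsmul, ← sub_smul, smul_smul]

variable {n : ℕ} [NeZero n]

theorem transfer_pow_nnnorm_fourierAverage_sq_le (c : ℕ → ℕ) (a : ℤ) (K N : ℕ)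
    (x : UnitAddCircle) :
    (((nsmulBranches n).transfer NNReal ^ N)
        (fun y ↦ ‖fourierAverage (fun k ↦ c k • y) a K‖₊ ^ 2) x : ℝ) ≤
      (K : ℝ)⁻¹ ^ 2 * (n ^ N * ((Finset.range K ×ˢ Finset.range K).filter
        fun q ↦ ((n ^ N : ℕ) : ℤ) ∣ a * ((c q.1 : ℤ) - c q.2)).card : ℕ) := by
  set W : UnitAddCircle → NNReal := fun y ↦ ‖fourierAverage (fun k ↦ c k • y) a K‖₊ ^ 2
  set φ : NNReal →+* ℂ := Complex.ofRealHom.comp NNReal.toRealHom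
  have hW : φ ∘ W = ((K : ℂ)⁻¹ ^ 2) • ∑ q ∈ Finset.range K ×ˢ Finset.range K,
      ⇑(fourier (a * ((c q.1 : ℤ) - c q.2))) := by
    ext y
    refine (ofReal_nnnorm_fourierAverage_sq (fun k ↦ c k • y) a K).trans ?_
    simp only [fourier_nsmul_sub_nsmul, Pi.smul_apply, Finset.sum_apply, smul_eq_mul]
  have hnorm (r : NNReal) : (r : ℝ) = ‖φ r‖ := (Complex.norm_of_nonneg r.coe_nonneg).symm
  rw [hnorm, ← Function.comp_apply (f := φ), ← InverseBranches.transfer_pow_comp_ringHom, hW,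
    map_smul, Pi.smul_apply, norm_smul, norm_pow, norm_inv, Complex.norm_natCast]
  exact mul_le_mul_of_nonneg_left (norm_transfer_pow_sum_fourier_le _ _ _ _) (by positivity)

theorem exists_transfer_pow_enorm_fourierAverage_sq_le {m : ℕ} (hm : 2 ≤ m) (hmn : m.Coprime n)
    {a : ℤ} (ha : a ≠ 0) :
    ∃ B : ℕ, ∀ N K, n ^ N ≤ K → ∀ x, ((nsmulBranches n).transfer ℝ≥0∞ ^ N)
      (fun y ↦ ‖fourierAverage (fun k ↦ m ^ k • y) a K‖ₑ ^ 2) x ≤ B := by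
  obtain ⟨B, hB⟩ := exists_pow_mul_card_filter_dvd_le hm (NeZero.pos n) hmn ha
  refine ⟨B, fun N K hNK x ↦ ?_⟩
  set W : UnitAddCircle → NNReal := fun y ↦ ‖fourierAverage (fun k ↦ m ^ k • y) a K‖₊ ^ 2
  have hK : (0 : ℝ) < K := by exact_mod_cast (pow_pos (NeZero.pos n) N).trans_le hNK
  have hcard : ((nsmulBranches n).transfer NNReal ^ N) W x ≤ B := by
    refine NNReal.coe_le_coe.1
      ((transfer_pow_nnnorm_fourierAverage_sq_le (fun k ↦ m ^ k) a K N x).trans ?_)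
    rw [inv_pow, inv_mul_le_iff₀ (by positivity), mul_comm (_ ^ 2)]
    exact_mod_cast hB N K hNK
  have hcoe : (fun y ↦ ‖fourierAverage (fun k ↦ m ^ k • y) a K‖ₑ ^ 2) =
      ENNReal.ofNNRealHom ∘ W :=
    funext fun y ↦ (ENNReal.coe_pow _ _).symm
  rw [hcoe, InverseBranches.transfer_pow_comp_ringHom]
  exact (ENNReal.coe_le_coe.2 hcard).trans_eq (ENNReal.coe_natCast B)

end FourierAverage

section GeometricSubsequence

theorem mul_logb_le_log_floor_pow_add_one {n : ℕ} (hn : 2 ≤ n) {c : ℝ} (hc : 1 < c) (j : ℕ) :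
    j * Real.logb n c ≤ Nat.log n ⌊c ^ j⌋₊ + 1 := by
  have hlt : ⌊c ^ j⌋₊ + 1 ≤ n ^ (Nat.log n ⌊c ^ j⌋₊ + 1) := Nat.lt_pow_succ_log_self hn _
  rw [← Real.logb_pow, Real.logb_le_iff_le_rpow (by exact_mod_cast hn) (by positivity)]
  calc c ^ j ≤ (⌊c ^ j⌋₊ + 1 : ℕ) := by exact_mod_cast (Nat.lt_floor_add_one _).le
    _ ≤ (n ^ (Nat.log n ⌊c ^ j⌋₊ + 1) : ℕ) := by exact_mod_cast hlt
    _ = (n : ℝ) ^ ((Nat.log n ⌊c ^ j⌋₊ : ℝ) + 1) := by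
      rw [Nat.cast_pow, ← Real.rpow_natCast, Nat.cast_succ]

theorem summable_pow_log_floor_pow {n : ℕ} (hn : 2 ≤ n) {c : ℝ} (hc : 1 < c) {θ : ℝ}
    (hθ : θ ∈ Set.Ioo (0 : ℝ) 1) : Summable fun j : ℕ ↦ θ ^ Nat.log n ⌊c ^ j⌋₊ := by
  have hs : 0 < Real.logb n c := Real.logb_pos (by exact_mod_cast hn) hc
  have hgeom := (summable_geometric_of_lt_one (Real.rpow_nonneg hθ.1.le _)
    (Real.rpow_lt_one hθ.1.le hθ.2 hs)).mul_left θ⁻¹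
  refine hgeom.of_nonneg_of_le (fun j ↦ pow_nonneg hθ.1.le _) fun j ↦ ?_
  rw [le_inv_mul_iff₀ hθ.1, ← pow_succ', ← Real.rpow_mul_natCast hθ.1.le, ← Real.rpow_natCast,
    mul_comm, Nat.cast_succ]
  exact Real.rpow_le_rpow_of_exponent_ge hθ.1 hθ.2.le (mul_logb_le_log_floor_pow_add_one hn hc j)

theorem floor_pow_ne_zero {c : ℝ} (hc : 1 < c) (j : ℕ) : ⌊c ^ j⌋₊ ≠ 0 :=
  (Nat.floor_pos.2 (one_le_pow₀ hc.le)).ne'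

theorem tendsto_average_of_tendsto_average_floor_pow {c : ℕ → ℝ} (hc₁ : ∀ i, 1 < c i)
    (hc : Tendsto c atTop (nhds 1)) {v : ℕ → ℝ} {C l : ℝ} (hv : ∀ k, -C ≤ v k)
    (h : ∀ i, Tendsto (fun j : ℕ ↦ (⌊c i ^ j⌋₊ : ℝ)⁻¹ * ∑ k ∈ Finset.range ⌊c i ^ j⌋₊, v k) atTop
      (nhds l)) :
    Tendsto (fun K : ℕ ↦ (K : ℝ)⁻¹ * ∑ k ∈ Finset.range K, v k) atTop (nhds l) := by
  -- Adding `C` makes the partial sums monotone, as the interpolation lemma requires.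
  set u : ℕ → ℝ := fun K ↦ ∑ k ∈ Finset.range K, (C + v k)
  have hmono : Monotone u := monotone_nat_of_le_succ fun K ↦ by
    simp only [u, Finset.sum_range_succ]
    linarith [hv K]
  have hu {K : ℕ} (hK : K ≠ 0) : u K / K = C + (K : ℝ)⁻¹ * ∑ k ∈ Finset.range K, v k := by
    simp only [u, Finset.sum_add_distrib, Finset.sum_const, Finset.card_range, nsmul_eq_mul]
    field_simp
  have hlim := tendsto_div_of_monotone_of_tendsto_div_floor_pow u (C + l) hmono c hc₁ hc fun i ↦
    ((h i).const_add C).congr fun j ↦ (hu (floor_pow_ne_zero (hc₁ i) j)).symm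
  refine (add_sub_cancel_left C l ▸ hlim.sub_const C).congr' ?_
  filter_upwards [eventually_ne_atTop 0] with K hK
  rw [hu hK, add_sub_cancel_left]

theorem tendsto_complex_average_of_tendsto_average_floor_pow {c : ℕ → ℝ} (hc₁ : ∀ i, 1 < c i)
    (hc : Tendsto c atTop (nhds 1)) {v : ℕ → ℂ} {C : ℝ} {l : ℂ} (hv : ∀ k, ‖v k‖ ≤ C)
    (h : ∀ i, Tendsto (fun j : ℕ ↦ (⌊c i ^ j⌋₊ : ℂ)⁻¹ * ∑ k ∈ Finset.range ⌊c i ^ j⌋₊, v k) atTop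
      (nhds l)) :
    Tendsto (fun K : ℕ ↦ (K : ℂ)⁻¹ * ∑ k ∈ Finset.range K, v k) atTop (nhds l) := by
  have hre (K : ℕ) : ((K : ℂ)⁻¹ * ∑ k ∈ Finset.range K, v k).re =
      (K : ℝ)⁻¹ * ∑ k ∈ Finset.range K, (v k).re := by
    rw [← Complex.ofReal_natCast, ← Complex.ofReal_inv, Complex.re_ofReal_mul, Complex.re_sum]
  have him (K : ℕ) : ((K : ℂ)⁻¹ * ∑ k ∈ Finset.range K, v k).im =
      (K : ℝ)⁻¹ * ∑ k ∈ Finset.range K, (v k).im := by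
    rw [← Complex.ofReal_natCast, ← Complex.ofReal_inv, Complex.im_ofReal_mul, Complex.im_sum]
  have hlim_re := tendsto_average_of_tendsto_average_floor_pow hc₁ hc
    (fun k ↦ neg_le_of_abs_le ((Complex.abs_re_le_norm _).trans (hv k)))
    fun i ↦ ((Complex.continuous_re.tendsto l).comp (h i)).congr fun j ↦ hre _
  have hlim_im := tendsto_average_of_tendsto_average_floor_pow hc₁ hc
    (fun k ↦ neg_le_of_abs_le ((Complex.abs_im_le_norm _).trans (hv k)))
    fun i ↦ ((Complex.continuous_im.tendsto l).comp (h i)).congr fun j ↦ him _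
  refine ((Complex.equivRealProdCLM.symm.continuous.tendsto (l.re, l.im)).comp
    (hlim_re.prodMk_nhds hlim_im)).congr fun K ↦ ?_
  exact Complex.ext (hre K).symm (him K).symm

end GeometricSubsequence

section WeylCriterion

section EmpiricalAverage

variable {X : Type*} [TopologicalSpace X]

/-- The average of the values of a continuous function at the first `N` terms of a sequence. -/
noncomputable def empiricalAverage (u : ℕ → X) (N : ℕ) : C(X, ℂ) →L[ℂ] ℂ :=
  (N : ℂ)⁻¹ • ∑ k ∈ Finset.range N, ContinuousMap.evalCLM ℂ (u k)

theorem empiricalAverage_apply (u : ℕ → X) (N : ℕ) (p : C(X, ℂ)) :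
    empiricalAverage u N p = (N : ℂ)⁻¹ * ∑ k ∈ Finset.range N, p (u k) := by
  simp [empiricalAverage]

variable [CompactSpace X]

theorem norm_empiricalAverage_le_one (u : ℕ → X) (N : ℕ) : ‖empiricalAverage u N‖ ≤ 1 := by
  refine ContinuousLinearMap.opNorm_le_bound _ zero_le_one fun p ↦ ?_
  rw [empiricalAverage_apply, norm_mul, norm_inv, Complex.norm_natCast, one_mul]
  refine inv_mul_le_of_le_mul₀ N.cast_nonneg (norm_nonneg p) ?_
  refine (norm_sum_le_of_le _ fun k _ ↦ p.norm_coe_le_norm (u k)).trans_eq ?_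
  rw [Finset.sum_const, Finset.card_range, nsmul_eq_mul]

variable [MeasurableSpace X] [BorelSpace X] (μ : Measure X) [IsFiniteMeasure μ]

theorem integrable_continuousMap (p : C(X, ℂ)) : Integrable p μ :=
  p.continuous.integrable_of_hasCompactSupport (HasCompactSupport.of_compactSpace p)

theorem continuous_integral_continuousMap : Continuous fun p : C(X, ℂ) ↦ ∫ x, p x ∂μ :=
  (continuous_integral.comp (ContinuousMap.toLp 1 μ ℂ).continuous).congr fun p ↦
    integral_congr_ae (ContinuousMap.coeFn_toLp μ p)

variable {μ}

theorem tendsto_empiricalAverage_of_dense_span {S : Set C(X, ℂ)}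
    (hS : (Submodule.span ℂ S).topologicalClosure = ⊤) {u : ℕ → X}
    (h : ∀ p ∈ S, Tendsto (empiricalAverage u · p) atTop (nhds (∫ x, p x ∂μ))) (p : C(X, ℂ)) :
    Tendsto (empiricalAverage u · p) atTop (nhds (∫ x, p x ∂μ)) := by
  have hequi : Equicontinuous fun N p ↦ empiricalAverage u N p :=
    (LipschitzWith.uniformEquicontinuous _ 1 fun N ↦
      (empiricalAverage u N).lipschitzWith_of_opNorm_le
        (norm_empiricalAverage_le_one u N)).equicontinuous
  have hclosed := hequi.isClosed_setOfPred_tendsto (l := atTop)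
    (continuous_integral_continuousMap μ)
  have hspan : (Submodule.span ℂ S : Set C(X, ℂ)) ⊆
      {p | Tendsto (empiricalAverage u · p) atTop (nhds (∫ x, p x ∂μ))} := by
    intro p hp
    induction hp using Submodule.span_induction with
    | mem p hp => exact h p hp
    | zero => simp
    | add p q _ _ hp hq =>
      simpa [integral_add (integrable_continuousMap μ p) (integrable_continuousMap μ q)] using
        hp.add hq
    | smul c p _ hp => simpa [integral_const_mul] using hp.const_mul c
  exact closure_minimal hspan hclosed
    (Submodule.topologicalClosure_coe (Submodule.span ℂ S) ▸ hS ▸ Submodule.mem_top)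

end EmpiricalAverage

theorem empiricalAverage_fourier (u : ℕ → UnitAddCircle) (a : ℤ) (N : ℕ) :
    empiricalAverage u N (fourier a) = fourierAverage u a N :=
  empiricalAverage_apply u N (fourier a)

theorem tendsto_average_of_tendsto_fourierAverage {u : ℕ → UnitAddCircle}
    (h : ∀ a : ℤ, a ≠ 0 → Tendsto (fourierAverage u a) atTop (nhds 0)) (f : C(UnitAddCircle, ℝ)) :
    Tendsto (fun N : ℕ ↦ (N : ℝ)⁻¹ * ∑ k ∈ Finset.range N, f (u k)) atTop
      (nhds (∫ y, f y)) := by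
  have hfourier : ∀ p ∈ Set.range (@fourier (1 : ℝ)),
      Tendsto (empiricalAverage u · p) atTop (nhds (∫ y, p y)) := by
    rintro _ ⟨a, rfl⟩
    simp only [empiricalAverage_fourier]
    rcases eq_or_ne a 0 with rfl | ha
    · refine tendsto_const_nhds.congr' ?_
      filter_upwards [eventually_ne_atTop 0] with N hN
      simp [fourierAverage, hN, measureReal_def]
    · rw [integral_eq_zero_of_add_right_eq_neg (fourier_add_half_inv_index ha one_pos)]
      exact h a ha
  have hlim := tendsto_empiricalAverage_of_dense_span span_fourier_closure_eq_top hfourier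
    (ContinuousMap.comp ⟨_, Complex.continuous_ofReal⟩ f)
  rw [← tendsto_ofReal_iff, ← integral_complex_ofReal]
  simpa [empiricalAverage_apply, integral_complex_ofReal] using hlim

end WeylCriterion

section Equidistribution

theorem tendsto_zero_of_tendsto_enorm_sq {ι E : Type*} [SeminormedAddGroup E] {l : Filter ι}
    {z : ι → E} (h : Tendsto (fun j ↦ ‖z j‖ₑ ^ 2) l (nhds 0)) : Tendsto z l (nhds 0) := by
  rw [tendsto_zero_iff_enorm_tendsto_zero]
  have hsqrt := h.ennrpow_const (1 / 2)
  rw [ENNReal.zero_rpow_of_pos one_half_pos] at hsqrt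
  refine hsqrt.congr fun j ↦ ?_
  rw [← ENNReal.rpow_natCast_mul]
  norm_num

variable {m n : ℕ}

theorem ae_tendsto_fourierAverage_floor_pow (hm : 2 ≤ m) (hn : 2 ≤ n) (hmn : m.Coprime n)
    {ρ : Measure UnitAddCircle} [IsProbabilityMeasure ρ]
    (hρ : Ergodic (fun x : UnitAddCircle ↦ n • x) ρ)
    (hent : ksEntropy (fun x : UnitAddCircle ↦ n • x) ρ ≠ 0) {c : ℝ} (hc : 1 < c) {a : ℤ}
    (ha : a ≠ 0) :
    ∀ᵐ x ∂ρ, Tendsto (fun j : ℕ ↦ fourierAverage (fun k ↦ m ^ k • x) a ⌊c ^ j⌋₊) atTop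
      (nhds 0) := by
  have : NeZero n := ⟨by lia⟩
  obtain ⟨B, hB⟩ := exists_transfer_pow_enorm_fourierAverage_sq_le hm hmn ha
  have hW (j : ℕ) : Measurable fun x ↦ ‖fourierAverage (fun k ↦ m ^ k • x) a ⌊c ^ j⌋₊‖ₑ ^ 2 :=
    (measurable_fourierAverage (fun k ↦ measurable_const_smul (m ^ k)) a _).enorm.pow_const 2
  have hdecay := (nsmulBranches n).ae_tendsto_zero_of_transfer_pow_le (isGenerator_firstDigit hn)
    hρ hent hW (fun θ hθ ↦ summable_pow_log_floor_pow hn hc hθ) (ENNReal.natCast_ne_top B)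
    fun j x ↦ hB _ _ (Nat.pow_log_le_self n (floor_pow_ne_zero hc j)) x
  filter_upwards [hdecay] with x hx
  exact tendsto_zero_of_tendsto_enorm_sq hx

theorem ae_tendsto_fourierAverage (hm : 2 ≤ m) (hn : 2 ≤ n) (hmn : m.Coprime n)
    {ρ : Measure UnitAddCircle} [IsProbabilityMeasure ρ]
    (hρ : Ergodic (fun x : UnitAddCircle ↦ n • x) ρ)
    (hent : ksEntropy (fun x : UnitAddCircle ↦ n • x) ρ ≠ 0) :
    ∀ᵐ x ∂ρ, ∀ a : ℤ, a ≠ 0 →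
      Tendsto (fourierAverage (fun k ↦ m ^ k • x) a) atTop (nhds 0) := by
  set c : ℕ → ℝ := fun i ↦ 1 + 1 / (i + 1)
  have hc₁ (i : ℕ) : 1 < c i := lt_add_of_pos_right 1 Nat.one_div_pos_of_nat
  have hc : Tendsto c atTop (nhds 1) := by
    simpa [c] using (tendsto_one_div_add_atTop_nhds_zero_nat (𝕜 := ℝ)).const_add 1
  refine ae_all_iff.2 fun a ↦ eventually_imp_distrib_left.2 fun ha ↦ ?_
  filter_upwards [ae_all_iff.2 fun i ↦
    ae_tendsto_fourierAverage_floor_pow hm hn hmn hρ hent (hc₁ i) ha] with x hx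
  exact tendsto_complex_average_of_tendsto_average_floor_pow hc₁ hc
    (fun k ↦ (Circle.norm_coe _).le) hx

theorem measurableSet_tendsto_fourierAverage (m : ℕ) :
    MeasurableSet {x : UnitAddCircle | ∀ a : ℤ, a ≠ 0 →
      Tendsto (fourierAverage (fun k ↦ m ^ k • x) a) atTop (nhds 0)} := by
  simp only [Set.ofPred_forall]
  exact .iInter fun a ↦ .iInter fun _ ↦ measurableSet_tendsto _ fun K ↦
    measurable_fourierAverage (fun k ↦ measurable_const_smul (m ^ k)) a K

theorem ae_of_forall_eq_lintegral {α : Type*} [MeasurableSpace α] {μ : Measure α}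
    {ν : Measure (Measure α)} (hμ : ∀ A, MeasurableSet A → μ A = ∫⁻ ρ, ρ A ∂ν) {p : α → Prop}
    (hp : MeasurableSet {x | p x}) (h : ∀ᵐ ρ ∂ν, ∀ᵐ x ∂ρ, p x) : ∀ᵐ x ∂μ, p x := by
  rw [ae_iff]
  exact (hμ _ hp.compl).trans (lintegral_eq_zero_of_ae_eq_zero (h.mono fun ρ hρ ↦ ae_iff.1 hρ))

theorem host_equidistribution_of_times_m_orbits_general
    (m n : ℕ) (hm : 2 ≤ m) (hn : 2 ≤ n) (hmn : Nat.Coprime m n)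
    (μ : Measure UnitAddCircle) (ν : Measure (Measure UnitAddCircle))
    (hν : ∀ᵐ ρ ∂ν, IsProbabilityMeasure ρ ∧
      Ergodic (fun x : UnitAddCircle ↦ n • x) ρ ∧
      ksEntropy (fun x : UnitAddCircle ↦ n • x) ρ ≠ 0)
    (hμ : ∀ A : Set UnitAddCircle, MeasurableSet A → μ A = ∫⁻ ρ, ρ A ∂ν) :
    ∀ᵐ x ∂μ, ∀ f : C(UnitAddCircle, ℝ),
      Tendsto (fun N : ℕ ↦ (N : ℝ)⁻¹ * ∑ k ∈ Finset.range N,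
          f ((fun y : UnitAddCircle ↦ m • y)^[k] x))
        atTop (nhds (∫ y, f y ∂(volume : Measure UnitAddCircle))) := by
  have hfourier : ∀ᵐ x ∂μ, ∀ a : ℤ, a ≠ 0 →
      Tendsto (fourierAverage (fun k ↦ m ^ k • x) a) atTop (nhds 0) := by
    refine ae_of_forall_eq_lintegral hμ (measurableSet_tendsto_fourierAverage m) ?_
    filter_upwards [hν] with ρ ⟨hprob, herg, hent⟩
    exact ae_tendsto_fourierAverage hm hn hmn herg hent
  filter_upwards [hfourier] with x hx f
  simpa only [smul_iterate] using tendsto_average_of_tendsto_fourierAverage hx f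

end Equidistribution

/-- Host: Let `m` and `n` be relatively prime integers, each at least 2,
and let `μ` be a `×n`-invariant Borel probability measure on `𝕋` whose ergodic
components with respect to `×n` have entropy bounded below by a positive constant.
Then for `μ`-a.e. `x` the orbit of `x` under iterates of `×m` equidistributes with
respect to Lebesgue measure. -/
theorem host_equidistribution_of_times_m_orbits
    (m n : ℕ) (hm : 2 ≤ m) (hn : 2 ≤ n) (hmn : Nat.Coprime m n)
    (μ : Measure UnitAddCircle) [IsProbabilityMeasure μ]
    (hinv : Measure.map (fun x : UnitAddCircle => n • x) μ = μ)
    (hdec : ∃ (h₀ : ℝ≥0∞), 0 < h₀ ∧ ∃ ν : Measure (Measure UnitAddCircle),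
      (∀ᵐ ρ ∂ν, IsProbabilityMeasure ρ ∧
        Ergodic (fun x : UnitAddCircle => n • x) ρ ∧
        h₀ ≤ ksEntropy (fun x : UnitAddCircle => n • x) ρ) ∧
      ∀ A : Set UnitAddCircle, MeasurableSet A → μ A = ∫⁻ ρ, ρ A ∂ν) :
    ∀ᵐ x ∂μ, ∀ f : C(UnitAddCircle, ℝ),
      Tendsto (fun N : ℕ => (N : ℝ)⁻¹ * ∑ k ∈ Finset.range N,
          f ((fun y : UnitAddCircle => m • y)^[k] x))
        atTop (nhds (∫ y, f y ∂(volume : Measure UnitAddCircle))) := by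
  obtain ⟨h₀, hh₀, ν, hν, hμ⟩ := hdec
  exact host_equidistribution_of_times_m_orbits_general m n hm hn hmn μ ν
    (hν.mono fun ρ h ↦ ⟨h.1, h.2.1, (hh₀.trans_le h.2.2).ne'⟩) hμ
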